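/- arXiv:1410.2342 — 4 statements merged into one kernel-verified Lean document; each statement's English description precedes it below -/
import Mathlib

section
/- Suppose A has decidable equality and fix a linear order on A. If the pair (G, A) is almost convex, then (G, A) is geodesically stackable with respect to the set C of shortlex normal forms; moreover the stacking map Φ can be chosen so that the structure is algorithmic, i.e., the set S_Φ := {(w, a, Φ(π(w), a)) : w ∈ List A, a ∈ A} ⊆ List A × A × List A has computable membership predicate (ComputablePred). -/
namespace Stk

variable {G : Type*} [Group G] {A : Type*}

/-- Evaluation of a word over the generating alphabet in the group. -/
def eval (ρ : A → G) (w : List A) : G := (w.map ρ).prod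

/-- `C` is a set of normal forms: evaluation restricted to `C` is a bijection onto `G`. -/
def IsNormalFormSet (ρ : A → G) (C : Set (List A)) : Prop :=
  ∀ g : G, ∃! w : List A, w ∈ C ∧ eval ρ w = g

/-- The directed edge `(g, a)` of the Cayley graph is degenerate with respect to `C`. -/
def IsDegenerate (ρ : A → G) (ι : A → A) (C : Set (List A)) (e : G × A) : Prop :=
  ∃ y₁ y₂ : List A, y₁ ∈ C ∧ eval ρ y₁ = e.1 ∧ y₂ ∈ C ∧ eval ρ y₂ = e.1 * ρ e.2 ∧
    (y₁ ++ [e.2] = y₂ ∨ y₁ = y₂ ++ [ι e.2])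

/-- A non-degenerate edge is recursive. -/
def IsRecursive (ρ : A → G) (ι : A → A) (C : Set (List A)) (e : G × A) : Prop :=
  ¬ IsDegenerate ρ ι C e

/-- `e` is one of the edges along the path starting at `g` labeled by the word `w`. -/
def EdgeOnPath (ρ : A → G) (g : G) (w : List A) (e : G × A) : Prop :=
  ∃ i : Fin w.length, e = (g * eval ρ (w.take i), w.get i)

/-- A stackable structure for `(G, A)`: a normal form set `C` containing the empty word,
a well-founded strict partial order `lt` on the recursive edges, and a constant `k`,
such that each edge `(g, a)` admits a word of length at most `k` evaluating to `ρ a`,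
each of whose edges along the path from `g` is degenerate or recursive and `lt`-below
`(g, a)`. -/
def IsStackableStructure (ρ : A → G) (ι : A → A) (C : Set (List A))
    (lt : G × A → G × A → Prop) (k : ℕ) : Prop :=
  ([] : List A) ∈ C ∧ IsNormalFormSet ρ C ∧
  (∀ e e' : G × A, lt e e' → IsRecursive ρ ι C e ∧ IsRecursive ρ ι C e') ∧
  Transitive lt ∧ WellFounded lt ∧
  ∀ g : G, ∀ a : A, ∃ w : List A, w.length ≤ k ∧ eval ρ w = ρ a ∧
    ∀ e' : G × A, EdgeOnPath ρ g w e' → IsDegenerate ρ ι C e' ∨ lt e' (g, a)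

/-- The pair `(G, A)` is stackable. -/
def IsStackable (ρ : A → G) (ι : A → A) : Prop :=
  ∃ (C : Set (List A)) (lt : G × A → G × A → Prop) (k : ℕ),
    IsStackableStructure ρ ι C lt k

/-- A stacking map for a stackable structure. -/
def IsStackingMap (ρ : A → G) (ι : A → A) (C : Set (List A))
    (lt : G × A → G × A → Prop) (k : ℕ) (Φ : G × A → List A) : Prop :=
  ∀ e : G × A, IsRecursive ρ ι C e →
    eval ρ (Φ e) = ρ e.2 ∧ (Φ e).length ≤ k ∧
    ∀ e' : G × A, EdgeOnPath ρ e.1 (Φ e) e' → IsDegenerate ρ ι C e' ∨ lt e' e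

/-- A stacking map extended by `Φ (g, a) = [a]` on degenerate edges. -/
def IsExtendedStackingMap (ρ : A → G) (ι : A → A) (C : Set (List A))
    (lt : G × A → G × A → Prop) (k : ℕ) (Φ : G × A → List A) : Prop :=
  (∀ e : G × A, IsDegenerate ρ ι C e → Φ e = [e.2]) ∧ IsStackingMap ρ ι C lt k Φ

/-- A word is freely reduced if no letter is followed by its formal inverse. -/
def FreelyReduced (ι : A → A) (w : List A) : Prop :=
  List.Chain' (fun a b => b ≠ ι a) w


/-- Word length of a group element with respect to the generating set. -/
noncomputable def wlen (ρ : A → G) (g : G) : ℕ :=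
  sInf {n : ℕ | ∃ w : List A, w.length = n ∧ eval ρ w = g}

/-- The path starting at `g` labeled by `w` lies in the ball of radius `n`: all vertices
are within distance `n` of the identity, and no edge has both endpoints at distance
exactly `n`. -/
def PathInBall (ρ : A → G) (g : G) (w : List A) (n : ℕ) : Prop :=
  (∀ p : List A, p <+: w → wlen ρ (g * eval ρ p) ≤ n) ∧
  ∀ (p : List A) (a : A), p ++ [a] <+: w →
    ¬ (wlen ρ (g * eval ρ p) = n ∧ wlen ρ (g * eval ρ (p ++ [a])) = n)

/-- `(G, A)` is almost convex. -/
def IsAlmostConvex (ρ : A → G) : Prop :=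
  ∃ k : ℕ, ∀ (n : ℕ) (g h : G), wlen ρ g = n → wlen ρ h = n →
    wlen ρ (g⁻¹ * h) ≤ 2 →
    ∃ w : List A, w.length ≤ k ∧ eval ρ w = g⁻¹ * h ∧ PathInBall ρ g w n

/-- The average distance to the identity of the endpoints of an edge. -/
noncomputable def edgeDist (ρ : A → G) (e : G × A) : ℚ :=
  ((wlen ρ e.1 : ℚ) + (wlen ρ (e.1 * ρ e.2) : ℚ)) / 2

/-- The basic relation whose transitive closure is `<_Φ`: `e'` precedes `e` if both are
recursive and `e'` lies along the path of `Φ e`. -/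
def FlowPrec (ρ : A → G) (ι : A → A) (C : Set (List A)) (Φ : G × A → List A)
    (e' e : G × A) : Prop :=
  IsRecursive ρ ι C e ∧ IsRecursive ρ ι C e' ∧ EdgeOnPath ρ e.1 (Φ e) e'

/-- `(G, A)` is geodesically stackable: stackable with geodesic normal forms and a
stacking map compatible with distance to the identity. -/
def IsGeodesicallyStackable (ρ : A → G) (ι : A → A) : Prop :=
  ∃ (C : Set (List A)) (lt : G × A → G × A → Prop) (k : ℕ) (Φ : G × A → List A),
    IsStackableStructure ρ ι C lt k ∧ IsStackingMap ρ ι C lt k Φ ∧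
    (∀ w ∈ C, w.length = wlen ρ (eval ρ w)) ∧
    ∀ e' e : G × A, Relation.TransGen (FlowPrec ρ ι C Φ) e' e →
      edgeDist ρ e' < edgeDist ρ e

/-- The canonical `Primcodable` encoding of a finite type with decidable equality. -/
noncomputable instance (priority := 100) primcodableOfFintype {B : Type*} [Fintype B] [DecidableEq B] :
    Primcodable B :=
  Primcodable.ofEquiv (Fin (Fintype.card B)) (Fintype.equivFin B)

/-- The shortlex order on words induced by a linear order on the alphabet. -/
def ShortlexLt {A : Type*} [LinearOrder A] (u v : List A) : Prop :=
  u.length < v.length ∨ (u.length = v.length ∧ List.Lex (· < ·) u v)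

/-- The set of shortlex normal forms: words that are shortlex minimal among all words
representing the same group element. -/
def shortlexNF (ρ : A → G) [LinearOrder A] : Set (List A) :=
  {w : List A | ∀ v : List A, eval ρ v = eval ρ w → v = w ∨ ShortlexLt w v}

section Words

variable {G : Type*} [Group G] {A : Type*}

theorem eval_nil (ρ : A → G) : eval ρ [] = 1 := rfl

theorem eval_append (ρ : A → G) (u v : List A) : eval ρ (u ++ v) = eval ρ u * eval ρ v := by
  simp [eval]

theorem eval_single (ρ : A → G) (a : A) : eval ρ [a] = ρ a := by simp [eval]

theorem eval_cons (ρ : A → G) (a : A) (u : List A) : eval ρ (a :: u) = ρ a * eval ρ u := by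
  simp [eval]

theorem eval_surj (ρ : A → G) (ι : A → A)
    (hgen : Subgroup.closure (Set.range ρ) = ⊤) (hρι : ∀ a : A, ρ (ι a) = (ρ a)⁻¹) (g : G) :
    ∃ w : List A, eval ρ w = g := by
  have hg : g ∈ Subgroup.closure (Set.range ρ) := by rw [hgen]; trivial
  induction hg using Subgroup.closure_induction with
  | mem x hx => obtain ⟨a, rfl⟩ := hx; exact ⟨[a], eval_single ρ a⟩
  | one => exact ⟨[], rfl⟩
  | mul x y _ _ hx hy =>
    obtain ⟨u, rfl⟩ := hx
    obtain ⟨v, rfl⟩ := hy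
    exact ⟨u ++ v, eval_append ρ u v⟩
  | inv x _ hx =>
    obtain ⟨u, rfl⟩ := hx
    clear * - hρι
    induction u with
    | nil => exact ⟨[], by simp [eval]⟩
    | cons a u ih =>
      obtain ⟨v, hv⟩ := ih
      exact ⟨v ++ [ι a], by rw [eval_append, hv, eval_single, hρι, eval_cons]; simp⟩

theorem wlen_eval_le (ρ : A → G) (w : List A) : wlen ρ (eval ρ w) ≤ w.length :=
  Nat.sInf_le ⟨w, rfl, rfl⟩

variable [LinearOrder A]

theorem lex_asymm {u v : List A} (h : List.Lex (· < ·) u v) : ¬ List.Lex (· < ·) v u :=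
  fun h' => lt_asymm (a := u) (b := v) h h'

theorem shortlex_asymm {u v : List A} (h : ShortlexLt u v) : ¬ ShortlexLt v u := by
  rintro (h' | ⟨e', h'⟩) <;> rcases h with h | ⟨e, h⟩
  · omega
  · omega
  · omega
  · exact lex_asymm h h'

theorem lex_of_append {b : A} : ∀ {u v : List A}, u.length = v.length →
    List.Lex (· < ·) (u ++ [b]) (v ++ [b]) → List.Lex (· < ·) u v
  | [], [], _, h => by
    cases h with
    | rel h => exact absurd h (lt_irrefl _)
    | cons h => cases h
  | x :: u, y :: v, hl, h => by
    simp only [List.cons_append] at h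
    cases h with
    | rel h => exact .rel h
    | cons h => exact .cons (lex_of_append (by simpa using hl) h)

theorem nf_unique (ρ : A → G) {u v : List A} (hu : u ∈ shortlexNF ρ) (hv : v ∈ shortlexNF ρ)
    (h : eval ρ u = eval ρ v) : u = v := by
  rcases hu v h.symm with e | e
  · exact e.symm
  · rcases hv u h with e' | e'
    · exact e'
    · exact absurd e (shortlex_asymm e')

theorem nf_init (ρ : A → G) {u : List A} {b : A} (h : u ++ [b] ∈ shortlexNF ρ) :
    u ∈ shortlexNF ρ := by
  intro v hv
  rcases h (v ++ [b]) (by rw [eval_append, eval_append, hv]) with e | e | ⟨e, e'⟩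
  · left; simpa using e
  · right; left; simpa using e
  · have e : u.length = v.length := by simpa using e
    right; right; exact ⟨e, lex_of_append e e'⟩

theorem nf_nil (ρ : A → G) : ([] : List A) ∈ shortlexNF ρ := by
  intro v _
  cases v with
  | nil => exact Or.inl rfl
  | cons a v => right; left; simp

theorem nf_length (ρ : A → G) {u : List A} (h : u ∈ shortlexNF ρ) :
    u.length = wlen ρ (eval ρ u) := by
  apply le_antisymm _ (wlen_eval_le ρ u)
  have := Nat.sInf_mem (s := {n : ℕ | ∃ w : List A, w.length = n ∧ eval ρ w = eval ρ u})
    ⟨_, u, rfl, rfl⟩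
  obtain ⟨w, hw, hw'⟩ := this
  change u.length ≤ sInf _
  rw [← hw]
  rcases h w hw' with e | e | e
  · rw [e]
  · exact e.le
  · exact e.1.le

/-- All words of length `n` in lexicographic order. -/
def wordsEq (As : List A) (n : ℕ) : List (List A) :=
  Nat.rec [[]] (fun _ l => As.flatMap fun a => l.map fun u => a :: u) n

/-- All words of length at most `n` in shortlex order. -/
def wordsLe (As : List A) (n : ℕ) : List (List A) :=
  (List.range (n + 1)).flatMap (wordsEq As)

theorem mem_wordsEq {A : Type*} {As : List A} (hAs : ∀ a, a ∈ As) (n : ℕ) (u : List A) :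
    u ∈ wordsEq As n ↔ u.length = n := by
  induction n generalizing u with
  | zero => simp [wordsEq]
  | succ n ih =>
    change u ∈ As.flatMap (fun a => (wordsEq As n).map fun u => a :: u) ↔ _
    simp only [List.mem_flatMap, List.mem_map, ih]
    constructor
    · rintro ⟨a, _, v, hv, rfl⟩; simp [hv]
    · intro h
      cases u with
      | nil => simp at h
      | cons a v => exact ⟨a, hAs a, v, by simpa using h, rfl⟩

theorem mem_wordsLe {A : Type*} {As : List A} (hAs : ∀ a, a ∈ As) (n : ℕ) (u : List A) :
    u ∈ wordsLe As n ↔ u.length ≤ n := by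
  simp [wordsLe, mem_wordsEq hAs]

theorem sorted_wordsEq {As : List A} (hs : As.Pairwise (· < ·)) (n : ℕ) :
    (wordsEq As n).Pairwise (List.Lex (· < ·)) := by
  induction n with
  | zero => simp [wordsEq]
  | succ n ih =>
    change (As.flatMap (fun a => (wordsEq As n).map fun u => a :: u)).Pairwise _
    rw [List.pairwise_flatMap]
    refine ⟨fun a _ => ?_, hs.imp ?_⟩
    · rw [List.pairwise_map]
      exact ih.imp fun h => .cons h
    · intro a b hab x hx y hy
      simp only [List.mem_map] at hx hy
      obtain ⟨x, _, rfl⟩ := hx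
      obtain ⟨y, _, rfl⟩ := hy
      exact .rel hab

theorem sorted_wordsLe {As : List A} (hAs : ∀ a, a ∈ As) (hs : As.Pairwise (· < ·)) (n : ℕ) :
    (wordsLe As n).Pairwise ShortlexLt := by
  rw [wordsLe, List.pairwise_flatMap]
  refine ⟨fun m _ => ?_, List.pairwise_lt_range.imp ?_⟩
  · refine (sorted_wordsEq hs m).imp_of_mem ?_
    intro x y hx hy h
    rw [mem_wordsEq hAs] at hx hy
    exact Or.inr ⟨by omega, h⟩
  · intro i j hij x hx y hy
    rw [mem_wordsEq hAs] at hx hy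
    exact Or.inl (by omega)

open Classical in
/-- The shortlex normal form of a word, by exhaustive search. -/
noncomputable def nfW (ρ : A → G) (As : List A) (w : List A) : List A :=
  ((wordsLe As w.length).filter (fun u => eval ρ u = eval ρ w)).head?.getD []

theorem nfW_spec (ρ : A → G) {As : List A} (hAs : ∀ a, a ∈ As) (hs : As.Pairwise (· < ·))
    (w : List A) : nfW ρ As w ∈ shortlexNF ρ ∧ eval ρ (nfW ρ As w) = eval ρ w := by
  classical
  have hm : w ∈ (wordsLe As w.length).filter (fun u => eval ρ u = eval ρ w) := by
    simp [mem_wordsLe hAs]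
  have hp := (sorted_wordsLe hAs hs w.length).filter (fun u => eval ρ u = eval ρ w)
  have hdef : nfW ρ As w =
    ((wordsLe As w.length).filter (fun u => eval ρ u = eval ρ w)).head?.getD [] := by
      rw [nfW]
  have hall : ∀ v : List A, v.length ≤ w.length → eval ρ v = eval ρ w →
      v ∈ (wordsLe As w.length).filter (fun u => eval ρ u = eval ρ w) := by
    intro v h1 h2; simp [mem_wordsLe hAs, h1, h2]
  have hall' : ∀ v ∈ (wordsLe As w.length).filter (fun u => eval ρ u = eval ρ w),
      v.length ≤ w.length ∧ eval ρ v = eval ρ w := by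
    intro v hv; simpa [mem_wordsLe hAs] using hv
  rw [hdef]
  generalize (wordsLe As w.length).filter (fun u => eval ρ u = eval ρ w) = l at *
  cases l with
  | nil => simp at hm
  | cons x l =>
    simp only [List.head?_cons, Option.getD_some]
    obtain ⟨h1, h2⟩ := hall' x (by simp)
    refine ⟨?_, h2⟩
    intro v hv
    rcases le_or_gt v.length w.length with h | h
    · have := hall v h (hv.trans h2)
      rcases List.mem_cons.1 this with e | e
      · exact Or.inl e
      · exact Or.inr ((List.pairwise_cons.1 hp).1 v e)
    · right; left; omega

end Words

section Derivations

variable {G : Type*} [Group G] {A : Type*} [DecidableEq A]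

/-- One round of closing a list of equations between words under contexts and transitivity. -/
def tstep (As : List A) (l : List (List A × List A)) : List (List A × List A) :=
  l ++ ((As.flatMap fun a => l.map fun p => (a :: p.1, a :: p.2)) ++
    ((As.flatMap fun a => l.map fun p => (p.1 ++ [a], p.2 ++ [a])) ++
      l.flatMap fun p => l.flatMap fun q => if p.2 = q.1 then [(p.1, q.2)] else []))

/-- Equations derivable from `R` in `m` rounds. -/
def tab (R : List (List A × List A)) (As : List A) (m : ℕ) : List (List A × List A) :=
  Nat.rec R (fun _ l => tstep As l) m

theorem mem_tab_succ {R : List (List A × List A)} {As : List A} {m : ℕ} {u v : List A} :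
    (u, v) ∈ tab R As (m + 1) ↔ (u, v) ∈ tab R As m ∨
      (∃ a ∈ As, ∃ u' v', (u', v') ∈ tab R As m ∧ u = a :: u' ∧ v = a :: v') ∨
      (∃ a ∈ As, ∃ u' v', (u', v') ∈ tab R As m ∧ u = u' ++ [a] ∧ v = v' ++ [a]) ∨
      ∃ t, (u, t) ∈ tab R As m ∧ (t, v) ∈ tab R As m := by
  change _ ∈ tstep As (tab R As m) ↔ _
  simp only [tstep, List.mem_append, List.mem_flatMap, List.mem_map, Prod.exists, Prod.mk.injEq]
  refine or_congr Iff.rfl (or_congr ?_ (or_congr ?_ ?_))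
  · grind
  · grind
  · constructor
    · rintro ⟨x, y, h, z, t, h', e⟩
      split_ifs at e with hh
      · simp at e
        obtain ⟨rfl, rfl⟩ := e
        subst hh
        exact ⟨_, h, h'⟩
      · simp at e
    · rintro ⟨t, h, h'⟩
      exact ⟨u, t, h, t, v, h', by simp⟩

theorem tab_sound (ρ : A → G) {R : List (List A × List A)} {As : List A}
    (hR : ∀ p ∈ R, eval ρ p.1 = eval ρ p.2) (m : ℕ) {u v : List A}
    (h : (u, v) ∈ tab R As m) : eval ρ u = eval ρ v := by
  induction m generalizing u v with
  | zero => exact hR _ h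
  | succ m ih =>
    rcases mem_tab_succ.1 h with h | ⟨a, _, u', v', h1, rfl, rfl⟩ | ⟨a, _, u', v', h1, rfl, rfl⟩ |
      ⟨t, h, h'⟩
    · exact ih h
    · rw [eval_cons, eval_cons, ih h1]
    · rw [eval_append, eval_append, ih h1]
    · exact (ih h).trans (ih h')

theorem tab_symm {R : List (List A × List A)} {As : List A}
    (hR : ∀ u v, (u, v) ∈ R → (v, u) ∈ R) {m : ℕ} {u v : List A}
    (h : (u, v) ∈ tab R As m) : (v, u) ∈ tab R As m := by
  induction m generalizing u v with
  | zero => exact hR _ _ h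
  | succ m ih =>
    rw [mem_tab_succ]
    rcases mem_tab_succ.1 h with h | ⟨a, ha, u', v', h1, rfl, rfl⟩ |
      ⟨a, ha, u', v', h1, rfl, rfl⟩ | ⟨t, h, h'⟩
    · exact Or.inl (ih h)
    · exact Or.inr (Or.inl ⟨a, ha, _, _, ih h1, rfl, rfl⟩)
    · exact Or.inr (Or.inr (Or.inl ⟨a, ha, _, _, ih h1, rfl, rfl⟩))
    · exact Or.inr (Or.inr (Or.inr ⟨t, ih h', ih h⟩))

theorem tab_mono {R : List (List A × List A)} {As : List A} {m n : ℕ} (hmn : m ≤ n)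
    {u v : List A} (h : (u, v) ∈ tab R As m) : (u, v) ∈ tab R As n := by
  induction hmn with
  | refl => exact h
  | step _ ih => exact mem_tab_succ.2 (Or.inl ih)

theorem tab_trans {R : List (List A × List A)} {As : List A} {m n k : ℕ}
    {u v t : List A} (h : (u, v) ∈ tab R As m) (h' : (v, t) ∈ tab R As n)
    (hm : m + 1 ≤ k) (hn : n + 1 ≤ k) : (u, t) ∈ tab R As k := by
  obtain ⟨k, rfl⟩ : ∃ j, k = j + 1 := ⟨k - 1, by omega⟩
  exact mem_tab_succ.2 (Or.inr (Or.inr (Or.inr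
    ⟨v, tab_mono (by omega) h, tab_mono (by omega) h'⟩)))

theorem tab_left {R : List (List A × List A)} {As : List A} (hAs : ∀ a, a ∈ As) {m : ℕ}
    (p : List A) {u v : List A} (h : (u, v) ∈ tab R As m) :
    (p ++ u, p ++ v) ∈ tab R As (m + p.length) := by
  induction p with
  | nil => exact h
  | cons a p ih => exact mem_tab_succ.2 (Or.inr (Or.inl ⟨a, hAs a, _, _, ih, rfl, rfl⟩))

theorem tab_right {R : List (List A × List A)} {As : List A} (hAs : ∀ a, a ∈ As) {m : ℕ}
    (a : A) {u v : List A} (h : (u, v) ∈ tab R As m) :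
    (u ++ [a], v ++ [a]) ∈ tab R As (m + 1) :=
  mem_tab_succ.2 (Or.inr (Or.inr (Or.inl ⟨a, hAs a, _, _, h, rfl, rfl⟩)))

theorem tab_refl {R : List (List A × List A)} {As : List A} (hAs : ∀ a, a ∈ As)
    (hR : ([], []) ∈ R) (u : List A) : (u, u) ∈ tab R As u.length := by
  have := tab_left (m := 0) (R := R) hAs u hR
  simpa using this

end Derivations

section Geometry

variable {G : Type*} [Group G] {A : Type*}

theorem wlen_step (ρ : A → G) [LinearOrder A] {nf : G → List A}
    (hnf : ∀ g, nf g ∈ shortlexNF ρ ∧ eval ρ (nf g) = g) (g : G) (c : A) :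
    wlen ρ (g * ρ c) ≤ wlen ρ g + 1 := by
  have h := wlen_eval_le ρ (nf g ++ [c])
  rw [eval_append, eval_single, (hnf g).2, List.length_append, nf_length ρ (hnf g).1,
    (hnf g).2] at h
  simpa using h

theorem wlen_step' (ρ : A → G) (ι : A → A) [LinearOrder A] (hρι : ∀ a : A, ρ (ι a) = (ρ a)⁻¹)
    {nf : G → List A} (hnf : ∀ g, nf g ∈ shortlexNF ρ ∧ eval ρ (nf g) = g) (g : G) (c : A) :
    wlen ρ g ≤ wlen ρ (g * ρ c) + 1 := by
  have := wlen_step ρ hnf (g * ρ c) (ι c)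
  simpa [hρι] using this

theorem nf_len (ρ : A → G) [LinearOrder A] {nf : G → List A}
    (hnf : ∀ g, nf g ∈ shortlexNF ρ ∧ eval ρ (nf g) = g) (g : G) :
    (nf g).length = wlen ρ g := by
  rw [nf_length ρ (hnf g).1, (hnf g).2]

/-- The last letter of the normal form of a nontrivial element. -/
theorem nf_last (ρ : A → G) [LinearOrder A] {nf : G → List A}
    (hnf : ∀ g, nf g ∈ shortlexNF ρ ∧ eval ρ (nf g) = g) {g : G} {n : ℕ}
    (hg : wlen ρ g = n + 1) :
    ∃ (h : G) (b : A), nf g = nf h ++ [b] ∧ h * ρ b = g ∧ wlen ρ h = n := by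
  have hl := nf_len ρ hnf g
  rw [hg] at hl
  rcases List.eq_nil_or_concat (nf g) with h0 | ⟨y, b, hy⟩
  · rw [h0] at hl; simp at hl
  · rw [List.concat_eq_append] at hy
    have h1 := (hnf g).1
    rw [hy] at h1
    have h2 := nf_init ρ h1
    have h3 : nf (eval ρ y) = y := nf_unique ρ (hnf _).1 h2 (hnf _).2
    refine ⟨eval ρ y, b, by rw [h3, hy], ?_, ?_⟩
    · rw [← (hnf g).2, hy, eval_append, eval_single]
    · rw [← nf_len ρ hnf, h3]
      rw [hy] at hl; simpa using hl

theorem PathInBall.initial {ρ : A → G} {g : G} {u v : List A} {n : ℕ}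
    (h : PathInBall ρ g (u ++ v) n) : PathInBall ρ g u n :=
  ⟨fun p hp => h.1 p (hp.trans (List.prefix_append _ _)),
    fun p a hp => h.2 p a (hp.trans (List.prefix_append _ _))⟩

/-- Edges on a path in the ball of radius `n`. -/
theorem PathInBall.edge {ρ : A → G} {g : G} {w : List A} {n : ℕ}
    (h : PathInBall ρ g w n) {e : G × A} (he : EdgeOnPath ρ g w e) :
    wlen ρ e.1 + wlen ρ (e.1 * ρ e.2) < 2 * n := by
  obtain ⟨i, rfl⟩ := he
  have hi := i.2
  have e1 : w.take i ++ [w.get i] = w.take (i + 1) := by simp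
  have h1 := h.1 (w.take i) (List.take_prefix _ _)
  have h2 := h.1 (w.take i ++ [w.get i]) (by rw [e1]; exact List.take_prefix _ _)
  have h3 := h.2 (w.take i) (w.get i) (by rw [e1]; exact List.take_prefix _ _)
  rw [eval_append, eval_single, ← mul_assoc] at h2 h3
  simp only
  omega

theorem edgeOnPath_append {ρ : A → G} {g : G} {u v : List A} {e : G × A}
    (he : EdgeOnPath ρ g (u ++ v) e) :
    EdgeOnPath ρ g u e ∨ EdgeOnPath ρ (g * eval ρ u) v e := by
  obtain ⟨⟨i, hi⟩, rfl⟩ := he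
  rcases lt_or_ge i u.length with h | h
  · left
    refine ⟨⟨i, h⟩, ?_⟩
    simp [List.take_append_of_le_length h.le, List.getElem_append_left h]
  · right
    have hi' : i < u.length + v.length := by simpa using hi
    refine ⟨⟨i - u.length, by omega⟩, ?_⟩
    simp [List.take_append, List.take_of_length_le h, List.getElem_append_right h, eval_append,
      mul_assoc]

theorem edgeOnPath_single {ρ : A → G} {g : G} {a : A} {e : G × A}
    (he : EdgeOnPath ρ g [a] e) : e = (g, a) := by
  obtain ⟨⟨i, hi⟩, rfl⟩ := he
  have hi : i = 0 := by simpa using hi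
  subst hi
  simp [eval]

variable [LinearOrder A]

/-- Following a path in a ball, rewriting to normal forms at each step. -/
theorem tab_path (ρ : A → G) {nf : G → List A}
    (hnf : ∀ g, nf g ∈ shortlexNF ρ ∧ eval ρ (nf g) = g)
    {R : List (List A × List A)} {As : List A} (hAs : ∀ a, a ∈ As)
    (hR0 : ([], []) ∈ R) {n F : ℕ} (hF : n ≤ F)
    (hE : ∀ (g : G) (c : A), wlen ρ g ≤ n → wlen ρ (g * ρ c) ≤ n →
      ¬ (wlen ρ g = n ∧ wlen ρ (g * ρ c) = n) → (nf g ++ [c], nf (g * ρ c)) ∈ tab R As F)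
    (g : G) (w : List A) (hw : PathInBall ρ g w n) :
    (nf g ++ w, nf (g * eval ρ w)) ∈ tab R As (F + 2 * w.length) := by
  induction w using List.reverseRecOn with
  | nil =>
    have h1 := hw.1 [] (List.prefix_rfl)
    simp only [eval_nil, mul_one, List.append_nil] at h1 ⊢
    refine tab_mono ?_ (tab_refl hAs hR0 (nf g))
    rw [nf_len ρ hnf]
    omega
  | append_singleton w c ih =>
    have ih := ih hw.initial
    have h1 := hw.1 w (List.prefix_append _ _)
    have h2 := hw.1 (w ++ [c]) List.prefix_rfl
    have h3 := hw.2 w c List.prefix_rfl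
    rw [eval_append, eval_single, ← mul_assoc] at h2 h3 ⊢
    have h4 := hE _ c h1 h2 h3
    have h5 := tab_right hAs c ih
    rw [List.append_assoc] at h5
    refine tab_trans h5 h4 ?_ ?_ <;> simp <;> omega

/-- Main bound: edges in the ball of radius `n` are derivable with bounded depth. -/
theorem tab_edge (ρ : A → G) (ι : A → A) (hρι : ∀ a : A, ρ (ι a) = (ρ a)⁻¹)
    {nf : G → List A}
    (hnf : ∀ g, nf g ∈ shortlexNF ρ ∧ eval ρ (nf g) = g) {k : ℕ}
    (hk : ∀ (n : ℕ) (g h : G), wlen ρ g = n → wlen ρ h = n → wlen ρ (g⁻¹ * h) ≤ 2 →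
      ∃ w : List A, w.length ≤ k ∧ eval ρ w = g⁻¹ * h ∧ PathInBall ρ g w n)
    {R : List (List A × List A)} {As : List A} (hAs : ∀ a, a ∈ As)
    (hR : ∀ u v : List A, (u, v) ∈ R ↔ u.length ≤ k + 2 ∧ v.length ≤ k + 2 ∧ eval ρ u = eval ρ v)
    (n : ℕ) (g : G) (c : A) (h1 : wlen ρ g ≤ n) (h2 : wlen ρ (g * ρ c) ≤ n)
    (h3 : ¬ (wlen ρ g = n ∧ wlen ρ (g * ρ c) = n)) :
    (nf g ++ [c], nf (g * ρ c)) ∈ tab R As (n * (2 * k + n + 10)) := by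
  have hRs : ∀ u v, (u, v) ∈ R → (v, u) ∈ R := by
    intro u v h
    rw [hR] at h ⊢
    exact ⟨h.2.1, h.1, h.2.2.symm⟩
  have hR0 : (([], []) : List A × List A) ∈ R := by rw [hR]; simp
  induction n generalizing g c with
  | zero => omega
  | succ n ih =>
    have hpath := fun g w => tab_path ρ hnf hAs hR0 (n := n) (F := n * (2 * k + n + 10))
      (by nlinarith) ih g w
    set F := n * (2 * k + n + 10) with hFdef
    have hF : F + 2 * k + n + 10 ≤ (n + 1) * (2 * k + (n + 1) + 10) := by
      rw [hFdef]; nlinarith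
    -- outgoing edges
    have up : ∀ (g : G) (c : A), wlen ρ g = n → wlen ρ (g * ρ c) = n + 1 →
        (nf g ++ [c], nf (g * ρ c)) ∈ tab R As (F + 2 * k + n + 3) := by
      intro g c hg hgc
      obtain ⟨h, b, hb1, hb2, hb3⟩ := nf_last ρ hnf hgc
      have e1 : g⁻¹ * h = ρ c * ρ (ι b) := by
        rw [hρι, ← mul_inv_eq_iff_eq_mul.2 hb2.symm]; group
      obtain ⟨w, hw1, hw2, hw3⟩ := hk n g h hg hb3 (by
        rw [e1]
        have := wlen_eval_le ρ [c, ι b]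
        simpa [eval] using this)
      have s1 := hpath g w hw3
      rw [hw2, mul_inv_cancel_left] at s1
      have s2 := tab_right hAs b s1
      have s3 : (([c], w ++ [b]) : List A × List A) ∈ tab R As 0 := by
        change _ ∈ R
        rw [hR]
        refine ⟨by simp, by simp; omega, ?_⟩
        rw [eval_append, eval_single, eval_single, hw2, e1, hρι]; simp
      have s4 := tab_left hAs (nf g) s3
      rw [← hb1, List.append_assoc] at s2
      rw [nf_len ρ hnf, hg] at s4
      refine tab_trans s4 s2 ?_ ?_ <;> omega
    by_cases hc : wlen ρ g ≤ n ∧ wlen ρ (g * ρ c) ≤ n ∧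
        ¬ (wlen ρ g = n ∧ wlen ρ (g * ρ c) = n)
    · exact tab_mono (by omega) (ih g c hc.1 hc.2.1 hc.2.2)
    have hs1 := wlen_step ρ hnf g c
    have hs2 := wlen_step' ρ ι hρι hnf g c
    have hcases : (wlen ρ g = n ∧ wlen ρ (g * ρ c) = n) ∨
      (wlen ρ g = n ∧ wlen ρ (g * ρ c) = n + 1) ∨
      (wlen ρ g = n + 1 ∧ wlen ρ (g * ρ c) = n) := by omega
    rcases hcases with ⟨ha, hb⟩ | ⟨ha, hb⟩ | ⟨ha, hb⟩
    · obtain ⟨w, hw1, hw2, hw3⟩ := hk n g (g * ρ c) ha hb (by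
        have := wlen_eval_le ρ [c]
        rw [eval_single] at this
        simp at this ⊢
        omega)
      have s1 := hpath g w hw3
      rw [hw2, mul_inv_cancel_left] at s1
      have s3 : (([c], w) : List A × List A) ∈ tab R As 0 := by
        change _ ∈ R
        rw [hR]
        refine ⟨by simp, by omega, ?_⟩
        rw [eval_single, hw2]; simp
      have s4 := tab_left hAs (nf g) s3
      rw [nf_len ρ hnf, ha] at s4
      refine tab_trans s4 s1 ?_ ?_ <;> omega
    · exact tab_mono (by omega) (up g c ha hb)
    · have hgg : g * ρ c * ρ (ι c) = g := by rw [hρι]; simp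
      have s1 := up (g * ρ c) (ι c) hb (by rw [hgg]; exact ha)
      rw [hgg] at s1
      have s2 := tab_right hAs c (tab_symm hRs s1)
      have s3 : (([ι c, c], []) : List A × List A) ∈ tab R As 0 := by
        change _ ∈ R
        rw [hR]
        simp [eval, hρι]
      have s4 := tab_left hAs (nf (g * ρ c)) s3
      rw [nf_len ρ hnf, hb] at s4
      simp only [List.append_nil, List.append_assoc, List.cons_append, List.nil_append] at s2 s4
      refine tab_trans s2 s4 ?_ ?_ <;> omega

/-- Depth bound for the word problem. -/
def bnd (k n : ℕ) : ℕ := (n + 1) * (2 * k + (n + 1) + 10) + 2 * n + 1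

theorem word_problem (ρ : A → G) (ι : A → A) (hρι : ∀ a : A, ρ (ι a) = (ρ a)⁻¹)
    {nf : G → List A}
    (hnf : ∀ g, nf g ∈ shortlexNF ρ ∧ eval ρ (nf g) = g) {k : ℕ}
    (hk : ∀ (n : ℕ) (g h : G), wlen ρ g = n → wlen ρ h = n → wlen ρ (g⁻¹ * h) ≤ 2 →
      ∃ w : List A, w.length ≤ k ∧ eval ρ w = g⁻¹ * h ∧ PathInBall ρ g w n)
    {R : List (List A × List A)} {As : List A} (hAs : ∀ a, a ∈ As)
    (hR : ∀ u v : List A, (u, v) ∈ R ↔ u.length ≤ k + 2 ∧ v.length ≤ k + 2 ∧ eval ρ u = eval ρ v)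
    (u v : List A) :
    (u, v) ∈ tab R As (bnd k (u.length + v.length)) ↔ eval ρ u = eval ρ v := by
  have hRs : ∀ u v, (u, v) ∈ R → (v, u) ∈ R := by
    intro u v h
    rw [hR] at h ⊢
    exact ⟨h.2.1, h.1, h.2.2.symm⟩
  have hR0 : (([], []) : List A × List A) ∈ R := by rw [hR]; simp
  constructor
  · exact tab_sound ρ (fun p hp => ((hR p.1 p.2).1 hp).2.2) _
  · intro huv
    set n := u.length + v.length with hn
    have key : ∀ w : List A, w.length ≤ n →
        (w, nf (eval ρ w)) ∈ tab R As ((n + 1) * (2 * k + (n + 1) + 10) + 2 * n) := by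
      intro w hw
      have hb : ∀ p : List A, p <+: w → wlen ρ (eval ρ p) ≤ n := fun p hp =>
        (wlen_eval_le ρ p).trans (hp.length_le.trans hw)
      have := tab_path ρ hnf hAs hR0 (n := n + 1) (F := (n + 1) * (2 * k + (n + 1) + 10))
        (by nlinarith) (tab_edge ρ ι hρι hnf hk hAs hR (n + 1)) 1 w
        ⟨fun p hp => by rw [one_mul]; exact (hb p hp).trans (by omega),
          fun p a hp => by
            have := hb p ((List.prefix_append _ _).trans hp)
            rw [one_mul]; omega⟩
      have h1 : nf 1 = [] := nf_unique ρ (hnf 1).1 (nf_nil ρ) (by rw [(hnf 1).2, eval_nil])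
      rw [h1, one_mul, List.nil_append] at this
      exact tab_mono (by omega) this
    have s1 := key u (by omega)
    have s2 := tab_symm hRs (key v (by omega))
    rw [← huv] at s2
    exact tab_trans s1 s2 (by simp [bnd]) (by simp [bnd])

/-- Natural-number version (doubled) of the distance of an edge to the identity. -/
noncomputable def dist2 (ρ : A → G) (e : G × A) : ℕ := wlen ρ e.1 + wlen ρ (e.1 * ρ e.2)

theorem exists_stacking_word (ρ : A → G) (ι : A → A) (hinv : Function.Involutive ι)
    (hρι : ∀ a : A, ρ (ι a) = (ρ a)⁻¹)
    {nf : G → List A}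
    (hnf : ∀ g, nf g ∈ shortlexNF ρ ∧ eval ρ (nf g) = g) {k : ℕ}
    (hk : ∀ (n : ℕ) (g h : G), wlen ρ g = n → wlen ρ h = n → wlen ρ (g⁻¹ * h) ≤ 2 →
      ∃ w : List A, w.length ≤ k ∧ eval ρ w = g⁻¹ * h ∧ PathInBall ρ g w n)
    (g : G) (a : A) :
    ∃ w : List A, w.length ≤ k + 1 ∧ eval ρ w = ρ a ∧
      ∀ e', EdgeOnPath ρ g w e' → IsDegenerate ρ ι (shortlexNF ρ) e' ∨
        dist2 ρ e' < dist2 ρ (g, a) := by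
  have hs1 := wlen_step ρ hnf g a
  have hs2 := wlen_step' ρ ι hρι hnf g a
  have hcases : wlen ρ (g * ρ a) = wlen ρ g ∨ wlen ρ (g * ρ a) = wlen ρ g + 1 ∨
      wlen ρ g = wlen ρ (g * ρ a) + 1 := by omega
  rcases hcases with hc | hc | hc
  · obtain ⟨w, hw1, hw2, hw3⟩ := hk _ g (g * ρ a) rfl hc (by
      have := wlen_eval_le ρ [a]
      rw [eval_single] at this
      simp at this ⊢
      omega)
    refine ⟨w, by omega, by rw [hw2]; simp, fun e' he' => Or.inr ?_⟩
    have := hw3.edge he'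
    simp only [dist2]
    omega
  · obtain ⟨h, b, hb1, hb2, hb3⟩ := nf_last ρ hnf hc
    have e1 : g⁻¹ * h = ρ a * ρ (ι b) := by
      rw [hρι, ← mul_inv_eq_iff_eq_mul.2 hb2.symm]; group
    obtain ⟨w, hw1, hw2, hw3⟩ := hk _ g h rfl hb3 (by
      rw [e1]
      have := wlen_eval_le ρ [a, ι b]
      simpa [eval] using this)
    refine ⟨w ++ [b], by simp; omega, ?_, fun e' he' => ?_⟩
    · rw [eval_append, eval_single, hw2, e1, hρι]; simp
    · rcases edgeOnPath_append he' with he' | he'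
      · right
        have := hw3.edge he'
        simp only [dist2]
        omega
      · left
        have := edgeOnPath_single he'
        rw [hw2, mul_inv_cancel_left] at this
        subst this
        exact ⟨nf h, nf (h * ρ b), (hnf _).1, (hnf _).2, (hnf _).1, (hnf _).2,
          Or.inl (by simp only [hb2]; exact hb1.symm)⟩
  · obtain ⟨h, b, hb1, hb2, hb3⟩ := nf_last ρ hnf hc
    have e1 : h⁻¹ * (g * ρ a) = ρ b * ρ a := by
      rw [← hb2]; group
    obtain ⟨w, hw1, hw2, hw3⟩ := hk _ h (g * ρ a) hb3 rfl (by
      rw [e1]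
      have := wlen_eval_le ρ [b, a]
      simpa [eval] using this)
    refine ⟨[ι b] ++ w, by simp; omega, ?_, fun e' he' => ?_⟩
    · rw [eval_append, eval_single, hw2, e1, hρι]; simp
    · have hh : g * ρ (ι b) = h := by rw [hρι, ← hb2]; simp
      rcases edgeOnPath_append he' with he' | he'
      · left
        have := edgeOnPath_single he'
        subst this
        exact ⟨nf g, nf h, (hnf _).1, (hnf _).2, (hnf _).1, by rw [(hnf _).2, hh],
          Or.inr (by rw [hb1, hinv])⟩
      · right
        rw [eval_single, hh] at he'
        have := hw3.edge he'
        simp only [dist2]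
        omega

end Geometry

section Computability

variable {G : Type*} [Group G] {A : Type*}

theorem primrec_wordsEq [Primcodable A] (As : List A) : Primrec (wordsEq As) := by
  refine Primrec.nat_rec₁ _ ?_
  refine Primrec.list_flatMap (Primrec.const As) ?_
  exact Primrec.list_map (Primrec.snd.comp Primrec.fst)
    (Primrec.list_cons.comp (Primrec.snd.comp Primrec.fst) Primrec.snd)

theorem primrec_wordsLe [Primcodable A] (As : List A) : Primrec (wordsLe As) :=
  Primrec.list_flatMap (Primrec.list_range.comp Primrec.succ)
    ((primrec_wordsEq As).comp Primrec.snd)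

theorem primrec_tstep [Primcodable A] [DecidableEq A] (As : List A) : Primrec (tstep As) := by
  refine Primrec.list_append.comp Primrec.id (Primrec.list_append.comp ?_
    (Primrec.list_append.comp ?_ ?_))
  · refine Primrec.list_flatMap (Primrec.const As) (Primrec.list_map Primrec.fst ?_)
    exact Primrec.pair
      (Primrec.list_cons.comp (Primrec.snd.comp Primrec.fst) (Primrec.fst.comp Primrec.snd))
      (Primrec.list_cons.comp (Primrec.snd.comp Primrec.fst) (Primrec.snd.comp Primrec.snd))
  · refine Primrec.list_flatMap (Primrec.const As) (Primrec.list_map Primrec.fst ?_)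
    exact Primrec.pair
      (Primrec.list_concat.comp (Primrec.fst.comp Primrec.snd) (Primrec.snd.comp Primrec.fst))
      (Primrec.list_concat.comp (Primrec.snd.comp Primrec.snd) (Primrec.snd.comp Primrec.fst))
  · refine Primrec.list_flatMap Primrec.id (Primrec.list_flatMap Primrec.fst ?_)
    refine Primrec.ite (Primrec.eq.comp (Primrec.snd.comp (Primrec.snd.comp Primrec.fst))
      (Primrec.fst.comp Primrec.snd)) ?_ (Primrec.const [])
    exact Primrec.list_cons.comp (Primrec.pair
      (Primrec.fst.comp (Primrec.snd.comp Primrec.fst))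
      (Primrec.snd.comp Primrec.snd)) (Primrec.const [])

theorem primrec_tab [Primcodable A] [DecidableEq A] (R : List (List A × List A)) (As : List A) :
    Primrec (tab R As) :=
  Primrec.nat_rec₁ _ ((primrec_tstep As).comp Primrec.snd)

theorem primrec_bnd (k : ℕ) : Primrec (bnd k) := by
  have h1 : Primrec (fun n : ℕ => n + 1) := Primrec.succ
  have h2 : Primrec (fun n : ℕ => 2 * k + (n + 1) + 10) :=
    Primrec.nat_add.comp (Primrec.nat_add.comp (Primrec.const _) h1) (Primrec.const 10)
  exact Primrec.succ.comp (Primrec.nat_add.comp (Primrec.nat_mul.comp h1 h2)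
    (Primrec.nat_mul.comp (Primrec.const 2) Primrec.id))

variable [LinearOrder A]

theorem primrec_eval_eq [Primcodable A] (ρ : A → G) (k : ℕ) (R : List (List A × List A))
    (As : List A)
    (hwp : ∀ u v : List A,
      (u, v) ∈ tab R As (bnd k (u.length + v.length)) ↔ eval ρ u = eval ρ v) :
    PrimrecRel fun u v : List A => eval ρ u = eval ρ v := by
  have h1 : PrimrecRel fun (p q : List A × List A) => p = q := Primrec.eq
  have h2 := h1.exists_mem_list
  have h3 : Primrec fun p : List A × List A => tab R As (bnd k (p.1.length + p.2.length)) :=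
    (primrec_tab R As).comp ((primrec_bnd k).comp (Primrec.nat_add.comp
      (Primrec.list_length.comp Primrec.fst) (Primrec.list_length.comp Primrec.snd)))
  refine PrimrecPred.of_eq (h2.comp h3 Primrec.id) ?_
  rintro ⟨u, v⟩
  refine Iff.trans ?_ (hwp u v)
  simp

theorem primrec_nfW [Primcodable A] (ρ : A → G) (As : List A)
    (h : PrimrecRel fun u v : List A => eval ρ u = eval ρ v) : Primrec (nfW ρ As) := by
  classical
  have h1 := h.listFilter.comp ((primrec_wordsLe As).comp Primrec.list_length) Primrec.id
  have h2 := Primrec.option_getD.comp (Primrec.list_head?.comp h1) (Primrec.const [])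
  refine h2.of_eq fun w => ?_
  rw [nfW]
  simp only [id]

theorem degenerate_iff (ρ : A → G) (ι : A → A) {As : List A} (hAs : ∀ a, a ∈ As)
    (hs : As.Pairwise (· < ·)) (w : List A) (a : A) :
    IsDegenerate ρ ι (shortlexNF ρ) (eval ρ w, a) ↔
      (nfW ρ As w ++ [a] = nfW ρ As (w ++ [a]) ∨ nfW ρ As w = nfW ρ As (w ++ [a]) ++ [ι a]) := by
  have h1 := nfW_spec ρ hAs hs w
  have h2 := nfW_spec ρ hAs hs (w ++ [a])
  constructor
  · rintro ⟨y₁, y₂, a1, a2, a3, a4, h⟩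
    have e1 : y₁ = nfW ρ As w := nf_unique ρ a1 h1.1 (a2.trans h1.2.symm)
    have e2 : y₂ = nfW ρ As (w ++ [a]) := nf_unique ρ a3 h2.1
      (a4.trans (by rw [h2.2, eval_append, eval_single]))
    rw [← e1, ← e2]
    exact h
  · intro h
    exact ⟨_, _, h1.1, h1.2, h2.1, by rw [h2.2, eval_append, eval_single], h⟩

theorem primrec_degenerate [Primcodable A] [Finite A] (ρ : A → G) (ι : A → A) {As : List A}
    (hAs : ∀ a, a ∈ As) (hs : As.Pairwise (· < ·)) (h : Primrec (nfW ρ As)) :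
    PrimrecPred fun p : List A × A => IsDegenerate ρ ι (shortlexNF ρ) (eval ρ p.1, p.2) := by
  have h1 : Primrec fun p : List A × A => nfW ρ As p.1 := h.comp Primrec.fst
  have h2 : Primrec fun p : List A × A => nfW ρ As (p.1 ++ [p.2]) :=
    h.comp (Primrec.list_concat.comp Primrec.fst Primrec.snd)
  have h3 : Primrec fun p : List A × A => ι p.2 := (Primrec.dom_finite ι).comp Primrec.snd
  refine PrimrecPred.of_eq (PrimrecPred.or
    (Primrec.eq.comp (Primrec.list_concat.comp h1 Primrec.snd) h2)
    (Primrec.eq.comp h1 (Primrec.list_concat.comp h2 h3))) ?_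
  rintro ⟨w, a⟩
  exact (degenerate_iff ρ ι hAs hs w a).symm

theorem primrec_dist2 [Primcodable A] (ρ : A → G) {As : List A}
    (hAs : ∀ a, a ∈ As) (hs : As.Pairwise (· < ·)) (h : Primrec (nfW ρ As)) :
    Primrec fun p : List A × A => dist2 ρ (eval ρ p.1, p.2) := by
  have h1 : Primrec fun p : List A × A => nfW ρ As p.1 := h.comp Primrec.fst
  have h2 : Primrec fun p : List A × A => nfW ρ As (p.1 ++ [p.2]) :=
    h.comp (Primrec.list_concat.comp Primrec.fst Primrec.snd)
  refine (Primrec.nat_add.comp (Primrec.list_length.comp h1)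
    (Primrec.list_length.comp h2)).of_eq ?_
  rintro ⟨w, a⟩
  have e1 := nfW_spec ρ hAs hs w
  have e2 := nfW_spec ρ hAs hs (w ++ [a])
  simp only [dist2]
  rw [nf_length ρ e1.1, nf_length ρ e2.1, e1.2, e2.2, eval_append, eval_single]

/-- The word `v` is an admissible value of the stacking map at the edge `e`. -/
def Admissible (ρ : A → G) (ι : A → A) (v : List A) (e : G × A) : Prop :=
  (IsDegenerate ρ ι (shortlexNF ρ) e ∧ v = [e.2]) ∨
  (¬ IsDegenerate ρ ι (shortlexNF ρ) e ∧ eval ρ v = ρ e.2 ∧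
    ∀ e', EdgeOnPath ρ e.1 v e' → IsDegenerate ρ ι (shortlexNF ρ) e' ∨
      dist2 ρ e' < dist2 ρ e)

theorem edge_condition_iff (ρ : A → G) {As : List A} (hAs : ∀ a, a ∈ As) (P : G × A → Prop)
    (w v : List A) :
    (∀ e', EdgeOnPath ρ (eval ρ w) v e' → P e') ↔
      ∀ b ∈ As, ∀ i ∈ List.range v.length,
        ¬ (v[i]? = some b) ∨ P (eval ρ (w ++ v.take i), b) := by
  constructor
  · intro h b _ i hi
    rw [List.mem_range] at hi
    by_cases hb : v[i]? = some b
    · right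
      apply h
      refine ⟨⟨i, hi⟩, ?_⟩
      rw [List.getElem?_eq_getElem hi] at hb
      simp only [Option.some.injEq] at hb
      rw [eval_append]
      simp [hb]
    · exact Or.inl hb
  · rintro h e' ⟨i, rfl⟩
    rcases h (v.get i) (hAs _) i (List.mem_range.2 i.2) with h | h
    · exact absurd (by simp) h
    · rwa [eval_append] at h

theorem primrec_admissible [Primcodable A] [Finite A] (ρ : A → G) (ι : A → A) {As : List A}
    (hAs : ∀ a, a ∈ As) (hs : As.Pairwise (· < ·))
    (heq : PrimrecRel fun u v : List A => eval ρ u = eval ρ v) :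
    PrimrecRel fun (v : List A) (p : List A × A) => Admissible ρ ι v (eval ρ p.1, p.2) := by
  have hn := primrec_nfW ρ As heq
  have hd := primrec_degenerate ρ ι hAs hs hn
  have hD := primrec_dist2 ρ hAs hs hn
  have hdeg : PrimrecPred fun x : List A × (List A × A) =>
      IsDegenerate ρ ι (shortlexNF ρ) (eval ρ x.2.1, x.2.2) := hd.comp Primrec.snd
  have hv1 : PrimrecPred fun x : List A × (List A × A) => x.1 = [x.2.2] :=
    Primrec.eq.comp Primrec.fst
      (Primrec.list_cons.comp (Primrec.snd.comp Primrec.snd) (Primrec.const []))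
  have hv2 : PrimrecPred fun x : List A × (List A × A) => eval ρ x.1 = ρ x.2.2 := by
    refine PrimrecPred.of_eq (heq.comp Primrec.fst
      (Primrec.list_cons.comp (Primrec.snd.comp Primrec.snd) (Primrec.const []))) ?_
    intro x
    rw [eval_single]
  -- the condition on a single edge
  let X := List A × (List A × A)
  have hc : PrimrecRel fun (i : ℕ) (y : A × X) =>
      ¬ (y.2.1[i]? = some y.1) ∨
        (IsDegenerate ρ ι (shortlexNF ρ) (eval ρ (y.2.2.1 ++ y.2.1.take i), y.1) ∨
          dist2 ρ (eval ρ (y.2.2.1 ++ y.2.1.take i), y.1) <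
            dist2 ρ (eval ρ y.2.2.1, y.2.2.2)) := by
    have pv : Primrec fun z : ℕ × (A × X) => z.2.2.1 :=
      Primrec.fst.comp (Primrec.snd.comp Primrec.snd)
    have pb : Primrec fun z : ℕ × (A × X) => z.2.1 := Primrec.fst.comp Primrec.snd
    have px : Primrec fun z : ℕ × (A × X) => z.2.2.2 :=
      Primrec.snd.comp (Primrec.snd.comp Primrec.snd)
    have pe : Primrec fun z : ℕ × (A × X) => ((z.2.2.2.1 ++ z.2.2.1.take z.1, z.2.1) : List A × A) :=
      Primrec.pair (Primrec.list_append.comp (Primrec.fst.comp px)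
        (Primrec.list_take.comp Primrec.fst pv)) pb
    refine PrimrecPred.or (PrimrecPred.not ?_) (PrimrecPred.or ?_ ?_)
    · exact Primrec.eq.comp (Primrec.list_getElem?.comp pv Primrec.fst)
        (Primrec.option_some.comp pb)
    · exact hd.comp pe
    · exact Primrec.nat_lt.comp (hD.comp pe) (hD.comp px)
  have hc2 : PrimrecRel fun (b : A) (x : X) => ∀ i ∈ List.range x.1.length,
      ¬ (x.1[i]? = some b) ∨
        (IsDegenerate ρ ι (shortlexNF ρ) (eval ρ (x.2.1 ++ x.1.take i), b) ∨
          dist2 ρ (eval ρ (x.2.1 ++ x.1.take i), b) <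
            dist2 ρ (eval ρ x.2.1, x.2.2)) :=
    hc.forall_mem_list.comp
      (f := fun z : A × X => List.range z.2.1.length) (g := fun z : A × X => z)
      (Primrec.list_range.comp (Primrec.list_length.comp (Primrec.fst.comp Primrec.snd)))
      Primrec.id
  have hc3 := hc2.forall_mem_list.comp (Primrec.const As) (Primrec.id (α := X))
  have hc4 : PrimrecPred fun x : X => ∀ e', EdgeOnPath ρ (eval ρ x.2.1) x.1 e' →
      IsDegenerate ρ ι (shortlexNF ρ) e' ∨ dist2 ρ e' < dist2 ρ (eval ρ x.2.1, x.2.2) := by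
    refine PrimrecPred.of_eq hc3 fun x => ?_
    exact (edge_condition_iff ρ hAs (fun e' => IsDegenerate ρ ι (shortlexNF ρ) e' ∨
      dist2 ρ e' < dist2 ρ (eval ρ x.2.1, x.2.2)) x.2.1 x.1).symm
  exact PrimrecPred.or (hdeg.and hv1) (hdeg.not.and (hv2.and hc4))

open Classical in
/-- The stacking map: the first admissible word. -/
noncomputable def stk (ρ : A → G) (ι : A → A) (As : List A) (K : ℕ) (e : G × A) : List A :=
  ((wordsLe As K).filter (fun v => Admissible ρ ι v e)).head?.getD []

theorem stk_spec (ρ : A → G) (ι : A → A) {As : List A} (hAs : ∀ a, a ∈ As) (K : ℕ) (e : G × A)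
    (h : ∃ v : List A, v.length ≤ K ∧ Admissible ρ ι v e) :
    (stk ρ ι As K e).length ≤ K ∧ Admissible ρ ι (stk ρ ι As K e) e := by
  classical
  obtain ⟨v, hv1, hv2⟩ := h
  have hm : v ∈ (wordsLe As K).filter (fun v => Admissible ρ ι v e) := by
    simp [mem_wordsLe hAs, hv1, hv2]
  have hall' : ∀ v ∈ (wordsLe As K).filter (fun v => Admissible ρ ι v e),
      v.length ≤ K ∧ Admissible ρ ι v e := by
    intro v hv; simpa [mem_wordsLe hAs] using hv
  have hdef : stk ρ ι As K e =
      ((wordsLe As K).filter (fun v => Admissible ρ ι v e)).head?.getD [] := by rw [stk]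
  rw [hdef]
  generalize (wordsLe As K).filter (fun v => Admissible ρ ι v e) = l at *
  cases l with
  | nil => simp at hm
  | cons x l => exact hall' x (by simp)

theorem primrec_stk [Primcodable A] (ρ : A → G) (ι : A → A) (As : List A) (K : ℕ)
    (h : PrimrecRel fun (v : List A) (p : List A × A) => Admissible ρ ι v (eval ρ p.1, p.2)) :
    Primrec fun p : List A × A => stk ρ ι As K (eval ρ p.1, p.2) := by
  classical
  have h1 := h.listFilter.comp (Primrec.const (wordsLe As K)) Primrec.id
  have h2 := Primrec.option_getD.comp (Primrec.list_head?.comp h1) (Primrec.const [])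
  refine h2.of_eq fun w => ?_
  rw [stk]
  simp only [id]

end Computability

/-- an almost convex pair `(G, A)` is geodesically stackable with respect
to the shortlex normal forms, with an algorithmic (extended) stacking map. -/
theorem geodesically_algorithmically_stackable_of_almostConvex {G : Type*} [Group G]
    {A : Type*} [Fintype A] [LinearOrder A]
    (ρ : A → G) (ι : A → A)
    (hgen : Subgroup.closure (Set.range ρ) = ⊤)
    (hne : ∀ a : A, ρ a ≠ 1)
    (hinv : Function.Involutive ι)
    (hρι : ∀ a : A, ρ (ι a) = (ρ a)⁻¹)
    (hAC : IsAlmostConvex ρ) :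
    ∃ (lt : G × A → G × A → Prop) (k : ℕ) (Φ : G × A → List A),
      IsStackableStructure ρ ι (shortlexNF ρ) lt k ∧
      IsExtendedStackingMap ρ ι (shortlexNF ρ) lt k Φ ∧
      (∀ w ∈ shortlexNF ρ, w.length = wlen ρ (eval ρ w)) ∧
      (∀ e' e : G × A, Relation.TransGen (FlowPrec ρ ι (shortlexNF ρ) Φ) e' e →
        edgeDist ρ e' < edgeDist ρ e) ∧
      ComputablePred (fun x : List A × A × List A =>
        x.2.2 = Φ (eval ρ x.1, x.2.1)) := by
  classical
  obtain ⟨k, hk⟩ := hAC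
  let As : List A := (Finset.univ : Finset A).sort (· ≤ ·)
  have hAs : ∀ a, a ∈ As := fun a => by simp [As]
  have hs : As.Pairwise (· < ·) := Finset.sortedLT_sort _ |>.pairwise
  have hex : ∀ g : G, ∃ y, y ∈ shortlexNF ρ ∧ eval ρ y = g := by
    intro g
    obtain ⟨w, rfl⟩ := eval_surj ρ ι hgen hρι g
    exact ⟨_, nfW_spec ρ hAs hs w⟩
  choose nf hnf using hex
  have hk' : ∀ (n : ℕ) (g h : G), wlen ρ g = n → wlen ρ h = n → wlen ρ (g⁻¹ * h) ≤ 2 →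
      ∃ w : List A, w.length ≤ k ∧ eval ρ w = g⁻¹ * h ∧ PathInBall ρ g w n := hk
  -- the finite list of relations
  have hfin : {p : List A × List A | p.1.length ≤ k + 2 ∧ p.2.length ≤ k + 2 ∧
      eval ρ p.1 = eval ρ p.2}.Finite :=
    ((List.finite_length_le A (k + 2)).prod (List.finite_length_le A (k + 2))).subset
      fun p hp => ⟨hp.1, hp.2.1⟩
  have hwp := word_problem ρ ι hρι hnf hk' (R := hfin.toFinset.toList) hAs
    (fun u v => by simp)
  have heq := primrec_eval_eq ρ k _ As hwp
  have hadm := primrec_admissible ρ ι hAs hs heq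
  -- the order on recursive edges
  let lt : G × A → G × A → Prop := fun e e' =>
    IsRecursive ρ ι (shortlexNF ρ) e ∧ IsRecursive ρ ι (shortlexNF ρ) e' ∧ dist2 ρ e < dist2 ρ e'
  have hdist : ∀ e e' : G × A, dist2 ρ e < dist2 ρ e' → edgeDist ρ e < edgeDist ρ e' := by
    intro e e' h
    have h' : (dist2 ρ e : ℚ) < (dist2 ρ e' : ℚ) := by exact_mod_cast h
    simp only [dist2, Nat.cast_add] at h'
    simp only [edgeDist]
    linarith
  have hadmex : ∀ e : G × A, ∃ v : List A, v.length ≤ k + 1 ∧ Admissible ρ ι v e := by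
    rintro ⟨g, a⟩
    by_cases hd : IsDegenerate ρ ι (shortlexNF ρ) (g, a)
    · exact ⟨[a], by simp, Or.inl ⟨hd, rfl⟩⟩
    · obtain ⟨w, h1, h2, h3⟩ := exists_stacking_word ρ ι hinv hρι hnf hk' g a
      exact ⟨w, h1, Or.inr ⟨hd, h2, h3⟩⟩
  have hstk := fun e => stk_spec ρ ι hAs (k + 1) e (hadmex e)
  have hmap : IsExtendedStackingMap ρ ι (shortlexNF ρ) lt (k + 1) (stk ρ ι As (k + 1)) := by
    refine ⟨fun e he => ?_, fun e he => ?_⟩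
    · rcases (hstk e).2 with h | h
      · exact h.2
      · exact absurd he h.1
    · rcases (hstk e).2 with h | h
      · exact absurd h.1 he
      · refine ⟨h.2.1, (hstk e).1, fun e' he' => ?_⟩
        by_cases hd : IsDegenerate ρ ι (shortlexNF ρ) e'
        · exact Or.inl hd
        · exact Or.inr ⟨hd, he, (h.2.2 e' he').resolve_left hd⟩
  refine ⟨lt, k + 1, stk ρ ι As (k + 1), ⟨nf_nil ρ, ?_, ?_, ?_, ?_, ?_⟩, hmap, ?_, ?_, ?_⟩
  · intro g
    exact ⟨nf g, hnf g, fun y hy => nf_unique ρ hy.1 (hnf g).1 (hy.2.trans (hnf g).2.symm)⟩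
  · exact fun e e' h => ⟨h.1, h.2.1⟩
  · exact fun e e' e'' h h' => ⟨h.1, h'.2.1, h.2.2.trans h'.2.2⟩
  · exact Subrelation.wf (r := InvImage (· < ·) (dist2 ρ)) (fun h => h.2.2)
      (InvImage.wf _ wellFounded_lt)
  · intro g a
    by_cases hd : IsDegenerate ρ ι (shortlexNF ρ) (g, a)
    · refine ⟨[a], by simp, eval_single ρ a, fun e' he' => Or.inl ?_⟩
      rw [edgeOnPath_single he']
      exact hd
    · have := hmap.2 (g, a) hd
      exact ⟨_, this.2.1, this.1, this.2.2⟩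
  · exact fun w hw => nf_length ρ hw
  · intro e' e h
    have hstep : ∀ x y, FlowPrec ρ ι (shortlexNF ρ) (stk ρ ι As (k + 1)) x y →
        edgeDist ρ x < edgeDist ρ y := by
      rintro x y ⟨hy, hx, hxy⟩
      exact hdist _ _ (((hmap.2 y hy).2.2 x hxy).resolve_left hx).2.2
    induction h with
    | single h => exact hstep _ _ h
    | tail _ h ih => exact ih.trans (hstep _ _ h)
  · have h1 := primrec_stk ρ ι As (k + 1) hadm
    refine PrimrecPred.computablePred (Primrec.eq.comp (Primrec.snd.comp Primrec.snd)
      (h1.comp (Primrec.pair Primrec.fst (Primrec.fst.comp Primrec.snd))))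



end Stk
end

section
/- Let p be an integer with |p| ≥ 2, and let BS(1,p) be the Baumslag–Solitar group presented by generators a, t and the single defining relator t·a·t⁻¹·a^{−p} (as a PresentedGroup quotient of the free group on two generators). Then every element of BS(1,p) is equal to the image of t^{−i} a^m t^k for exactly one triple (i, m, k) with i, k ∈ ℕ, m ∈ ℤ, and satisfying: p does not divide m, or i = 0, or k = 0. -/
/-- The Baumslag–Solitar group `BS(1, p)`, presented by generators `a`, `t` (the images of
`false`, `true`) and the single defining relator `t * a * t⁻¹ * a ^ (-p)`. -/
def BaumslagSolitar (p : ℤ) : Type :=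
  PresentedGroup ({FreeGroup.of true * FreeGroup.of false * (FreeGroup.of true)⁻¹ *
    (FreeGroup.of false) ^ (-p)} : Set (FreeGroup Bool))

instance (p : ℤ) : Group (BaumslagSolitar p) :=
  inferInstanceAs (Group (PresentedGroup _))

/-- The generator `a` of `BS(1, p)`. -/
def BaumslagSolitar.a (p : ℤ) : BaumslagSolitar p := PresentedGroup.of false

/-- The generator `t` of `BS(1, p)`. -/
def BaumslagSolitar.t (p : ℤ) : BaumslagSolitar p := PresentedGroup.of true


namespace BaumslagSolitar

theorem rel (p : ℤ) : t p * a p * (t p)⁻¹ = a p ^ p := by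
  have h : t p * a p * (t p)⁻¹ * (a p) ^ (-p) = 1 :=
    (PresentedGroup.one_of_mem (rels := ({FreeGroup.of true * FreeGroup.of false *
      (FreeGroup.of true)⁻¹ * (FreeGroup.of false) ^ (-p)} : Set (FreeGroup Bool)))
      (Set.mem_singleton _))
  rw [zpow_neg] at h
  exact mul_inv_eq_one.mp h

theorem t_mul (p m : ℤ) : t p * a p ^ m = a p ^ (p * m) * t p := by
  rw [zpow_mul, ← rel p, conj_zpow]
  group

theorem a_mul (p m : ℤ) (i : ℕ) :
    a p ^ m * t p ^ (-(i : ℤ)) = t p ^ (-(i : ℤ)) * a p ^ (p ^ i * m) := by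
  induction i with
  | zero => simp
  | succ n ih =>
    have h : a p ^ (p ^ n * m) * (t p)⁻¹ = (t p)⁻¹ * a p ^ (p ^ (n + 1) * m) := by
      rw [mul_inv_eq_iff_eq_mul, mul_assoc, eq_inv_mul_iff_mul_eq, t_mul]
      congr 2
      ring
    have e : t p ^ (-((n + 1 : ℕ) : ℤ)) = t p ^ (-(n : ℤ)) * (t p)⁻¹ := by
      rw [← zpow_sub_one]
      congr 1
      push_cast
      ring
    rw [e, ← mul_assoc, ih, mul_assoc, h, mul_assoc]

theorem exists_form (p : ℤ) (g : BaumslagSolitar p) : ∃ (i : ℕ) (m : ℤ) (k : ℕ),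
    g = t p ^ (-(i : ℤ)) * a p ^ m * t p ^ (k : ℤ) := by
  have hA : ∀ (n : ℤ) (y : BaumslagSolitar p), (∃ (i : ℕ) (m : ℤ) (k : ℕ),
      y = t p ^ (-(i : ℤ)) * a p ^ m * t p ^ (k : ℤ)) → ∃ (i : ℕ) (m : ℤ) (k : ℕ),
      a p ^ n * y = t p ^ (-(i : ℤ)) * a p ^ m * t p ^ (k : ℤ) := by
    rintro n y ⟨i, m, k, rfl⟩
    refine ⟨i, p ^ i * n + m, k, ?_⟩
    rw [← mul_assoc, ← mul_assoc, a_mul, mul_assoc (t p ^ (-(i : ℤ))), ← zpow_add]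
  have hmem : g ∈ Subgroup.closure (Set.range (PresentedGroup.of :
      Bool → BaumslagSolitar p)) := by
    have h := PresentedGroup.closure_range_of ({FreeGroup.of true * FreeGroup.of false *
      (FreeGroup.of true)⁻¹ * (FreeGroup.of false) ^ (-p)} : Set (FreeGroup Bool))
    exact h.ge (Subgroup.mem_top _)
  induction hmem using Subgroup.closure_induction_left with
  | one => exact ⟨0, 0, 0, by simp; rfl⟩
  | mul_left x hx y hy ih =>
    obtain ⟨b, rfl⟩ := hx
    cases b with
    | false =>
      have h := hA 1 y ih
      simp only [zpow_one] at h
      exact h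
    | true =>
      change ∃ (i : ℕ) (m : ℤ) (k : ℕ),
        t p * y = t p ^ (-(i : ℤ)) * a p ^ m * t p ^ (k : ℤ)
      obtain ⟨i, m, k, rfl⟩ := ih
      cases i with
      | zero =>
        refine ⟨0, p * m, k + 1, ?_⟩
        simp only [Nat.cast_zero, neg_zero, zpow_zero, one_mul]
        rw [← mul_assoc, t_mul, mul_assoc, ← zpow_one_add]
        push_cast
        rw [add_comm]
      | succ n =>
        refine ⟨n, m, k, ?_⟩
        rw [← mul_assoc, ← mul_assoc, ← zpow_one_add]
        congr 3
        push_cast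
        ring
  | inv_mul_cancel x hx y hy ih =>
    obtain ⟨b, rfl⟩ := hx
    cases b with
    | false =>
      have h := hA (-1) y ih
      simp only [zpow_neg_one] at h
      exact h
    | true =>
      change ∃ (i : ℕ) (m : ℤ) (k : ℕ),
        (t p)⁻¹ * y = t p ^ (-(i : ℤ)) * a p ^ m * t p ^ (k : ℤ)
      obtain ⟨i, m, k, rfl⟩ := ih
      refine ⟨i + 1, m, k, ?_⟩
      rw [← mul_assoc, ← mul_assoc, ← zpow_neg_one, ← zpow_add]
      congr 3
      push_cast
      ring

theorem reduce (p : ℤ) (i : ℕ) : ∀ (m : ℤ) (k : ℕ), ∃ x : ℕ × ℤ × ℕ,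
    (¬ (p ∣ x.2.1) ∨ x.1 = 0 ∨ x.2.2 = 0) ∧
      t p ^ (-(i : ℤ)) * a p ^ m * t p ^ (k : ℤ) =
      t p ^ (-(x.1 : ℤ)) * a p ^ x.2.1 * t p ^ (x.2.2 : ℤ) := by
  induction i with
  | zero => exact fun m k => ⟨(0, m, k), by simp⟩
  | succ n ih =>
    intro m k
    by_cases hm : p ∣ m
    · cases k with
      | zero => exact ⟨(n + 1, m, 0), by simp⟩
      | succ l =>
        obtain ⟨c, rfl⟩ := hm
        obtain ⟨x, hx, h⟩ := ih c l
        refine ⟨x, hx, ?_⟩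
        rw [← h]
        have e1 : t p ^ (-((n + 1 : ℕ) : ℤ)) = t p ^ (-(n : ℤ)) * (t p)⁻¹ := by
          rw [← zpow_sub_one]
          congr 1
          push_cast
          ring
        have e2 : t p ^ ((l + 1 : ℕ) : ℤ) = t p * t p ^ (l : ℤ) := by
          rw [← zpow_one_add]
          congr 1
          push_cast
          ring
        have e3 : a p ^ (p * c) = t p * a p ^ c * (t p)⁻¹ := by
          rw [t_mul]; group
        rw [e1, e2, e3]
        group
    · exact ⟨(n + 1, m, k), Or.inl hm, rfl⟩

/-- The affine action of `BS(1,p)` on `ℚ`. -/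
def act (p : ℤ) (hp : (p : ℚ) ≠ 0) : BaumslagSolitar p →* Equiv.Perm ℚ :=
  PresentedGroup.toGroup (f := fun b : Bool =>
      if b then Equiv.mulLeft₀ (p : ℚ) hp else Equiv.addRight (1 : ℚ)) (by
    intro r hr
    rw [Set.mem_singleton_iff] at hr
    subst hr
    ext x
    simp
    field_simp
    try ring)

theorem act_t (p : ℤ) (hp : (p : ℚ) ≠ 0) : act p hp (t p) = Equiv.mulLeft₀ (p : ℚ) hp := by
  unfold act t
  exact (PresentedGroup.toGroup.of _).trans (by simp)

theorem act_a (p : ℤ) (hp : (p : ℚ) ≠ 0) : act p hp (a p) = Equiv.addRight (1 : ℚ) := by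
  unfold act a
  exact (PresentedGroup.toGroup.of _).trans (by simp)

theorem act_t_pow (p : ℤ) (hp : (p : ℚ) ≠ 0) (k : ℕ) (x : ℚ) :
    act p hp (t p ^ k) x = p ^ k * x := by
  induction k with
  | zero => simp
  | succ n ih =>
    rw [pow_succ', map_mul, Equiv.Perm.mul_apply, ih, act_t]
    simp [pow_succ']
    ring

theorem act_a_zpow (p : ℤ) (hp : (p : ℚ) ≠ 0) (m : ℤ) (x : ℚ) :
    act p hp (a p ^ m) x = x + m := by
  rw [map_zpow, act_a]
  simp

theorem eqs (p : ℤ) (hp : p ≠ 0) (i k i' k' : ℕ) (m m' : ℤ)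
    (h : t p ^ (-(i : ℤ)) * a p ^ m * t p ^ (k : ℤ) =
      t p ^ (-(i' : ℤ)) * a p ^ m' * t p ^ (k' : ℤ)) :
    p ^ i' * m = p ^ i * m' ∧ p ^ (i' + k) = p ^ (i + k') := by
  have hq : (p : ℚ) ≠ 0 := by exact_mod_cast hp
  have h2 : t p ^ i' * (a p ^ m * t p ^ k) = t p ^ i * (a p ^ m' * t p ^ k') := by
    have h3 := congrArg (fun z => t p ^ ((i : ℤ) + i') * z) h
    simp only [← mul_assoc, ← zpow_add] at h3
    rw [show (i : ℤ) + i' + -i = i' by ring, show (i : ℤ) + i' + -i' = i by ring] at h3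
    simpa only [zpow_natCast, mul_assoc] using h3
  have key : ∀ x : ℚ, (p : ℚ) ^ i' * (p ^ k * x + m) = p ^ i * (p ^ k' * x + m') := by
    intro x
    have := congrArg (fun z => act p hq z x) h2
    simpa only [map_mul, Equiv.Perm.mul_apply, act_t_pow, act_a_zpow] using this
  have h0 := key 0
  have h1 := key 1
  have h4 : (p : ℚ) ^ i' * m = p ^ i * m' := by simpa using h0
  have h5 : (p : ℚ) ^ (i' + k) = p ^ (i + k') := by
    rw [pow_add, pow_add]; linarith
  exact ⟨by exact_mod_cast h4, by exact_mod_cast h5⟩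

theorem uniq_aux (p : ℤ) (hp : 2 ≤ |p|) (i k i' k' : ℕ) (m m' : ℤ) (hi : i ≤ i')
    (hc : ¬ p ∣ m' ∨ i' = 0 ∨ k' = 0)
    (h1 : p ^ i' * m = p ^ i * m') (h2 : p ^ (i' + k) = p ^ (i + k')) :
    i = i' ∧ m = m' ∧ k = k' := by
  have hp0 : p ≠ 0 := by rintro rfl; simp at hp
  have h3 : i' + k = i + k' := by
    have := congrArg Int.natAbs h2
    rw [Int.natAbs_pow, Int.natAbs_pow] at this
    rw [Int.abs_eq_natAbs] at hp
    exact Nat.pow_right_injective (by omega) this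
  obtain ⟨d, rfl⟩ := Nat.exists_eq_add_of_le hi
  rw [pow_add, mul_assoc] at h1
  have h4 := mul_left_cancel₀ (pow_ne_zero i hp0) h1
  rcases Nat.eq_zero_or_pos d with rfl | hd
  · simp at h4
    exact ⟨rfl, h4, by omega⟩
  · exfalso
    rcases hc with hc | hc | hc
    · exact hc (h4 ▸ (dvd_pow_self p hd.ne').mul_right m)
    · omega
    · omega

end BaumslagSolitar

/-- for `|p| ≥ 2`, every element of `BS(1, p)` equals `t⁻ⁱ aᵐ tᵏ` for
exactly one triple `(i, m, k)` with `i, k ∈ ℕ`, `m ∈ ℤ`, and `p ∤ m` or `i = 0` or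
`k = 0`. -/
theorem baumslagSolitar_normal_form (p : ℤ) (hp : 2 ≤ |p|) (g : BaumslagSolitar p) :
    ∃! x : ℕ × ℤ × ℕ,
      (¬ (p ∣ x.2.1) ∨ x.1 = 0 ∨ x.2.2 = 0) ∧
      g = (BaumslagSolitar.t p) ^ (-(x.1 : ℤ)) * (BaumslagSolitar.a p) ^ x.2.1 *
        (BaumslagSolitar.t p) ^ (x.2.2 : ℤ) := by
  have hp0 : p ≠ 0 := by rintro rfl; simp at hp
  obtain ⟨i, m, k, hg⟩ := BaumslagSolitar.exists_form p g
  obtain ⟨x, hx, h⟩ := BaumslagSolitar.reduce p i m k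
  refine ⟨x, ⟨hx, hg.trans h⟩, ?_⟩
  rintro y ⟨hy, h'⟩
  obtain ⟨e1, e2⟩ := BaumslagSolitar.eqs p hp0 _ _ _ _ _ _ (h'.symm.trans (hg.trans h))
  rcases le_total y.1 x.1 with hle | hle
  · obtain ⟨r1, r2, r3⟩ := BaumslagSolitar.uniq_aux p hp _ _ _ _ _ _ hle hx e1 e2
    exact Prod.ext r1 (Prod.ext r2 r3)
  · obtain ⟨r1, r2, r3⟩ := BaumslagSolitar.uniq_aux p hp _ _ _ _ _ _ hle hy e1.symm e2.symm
    exact Prod.ext r1.symm (Prod.ext r2.symm r3.symm)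
end

section
/- Let p be an integer with p ≥ 2, let BS(1,p) be the Baumslag–Solitar group presented by generators a, t and defining relator t·a·t⁻¹·a^{−p}, and let A be the four-element symmetric generating set {a, a⁻¹, t, t⁻¹} (a four-element type mapping to the images of a, a⁻¹, t, t⁻¹ in BS(1,p), with the evident inversion involution). Then the pair (BS(1,p), A) is stackable, with normal form set C = { t^{−i} a^m t^k (written as a word over A) : i, k ∈ ℕ, m ∈ ℤ, and (p ∤ m or i = 0 or k = 0) }. -/
namespace Stk

variable {G : Type*} [Group G] {A : Type*}

/-- The Baumslag–Solitar group `BS(1, p)`, presented by generators `a`, `t` (the images of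
`false`, `true`) and the single defining relator `t * a * t⁻¹ * a ^ (-p)`. -/
def BaumslagSolitar (p : ℤ) : Type :=
  PresentedGroup ({FreeGroup.of true * FreeGroup.of false * (FreeGroup.of true)⁻¹ *
    (FreeGroup.of false) ^ (-p)} : Set (FreeGroup Bool))

instance (p : ℤ) : Group (BaumslagSolitar p) :=
  inferInstanceAs (Group (PresentedGroup _))

/-- The generator `a` of `BS(1, p)`. -/
def BaumslagSolitar.a (p : ℤ) : BaumslagSolitar p := PresentedGroup.of false

/-- The generator `t` of `BS(1, p)`. -/
def BaumslagSolitar.t (p : ℤ) : BaumslagSolitar p := PresentedGroup.of true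

/-- The word `t⁻ⁱ aᵐ tᵏ` over the four-letter alphabet `{a, a⁻¹, t, t⁻¹}`, encoded as
`Fin 4` with `0 ↦ a`, `1 ↦ a⁻¹`, `2 ↦ t`, `3 ↦ t⁻¹`. -/
def bsWord (i : ℕ) (m : ℤ) (k : ℕ) : List (Fin 4) :=
  List.replicate i 3 ++
    (if 0 ≤ m then List.replicate m.toNat 0 else List.replicate (-m).toNat 1) ++
    List.replicate k 2

section Aux

open BaumslagSolitar

theorem bs_rel (p : ℤ) : t p * a p = a p ^ p * t p := by
  have h : (PresentedGroup.mk ({FreeGroup.of true * FreeGroup.of false * (FreeGroup.of true)⁻¹ *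
    (FreeGroup.of false) ^ (-p)} : Set (FreeGroup Bool))) (FreeGroup.of true * FreeGroup.of false *
      (FreeGroup.of true)⁻¹ * (FreeGroup.of false) ^ (-p)) = 1 :=
    PresentedGroup.one_of_mem (by simp)
  have h2 : t p * a p * (t p)⁻¹ * (a p) ^ (-p) = 1 := by
    rw [map_mul, map_mul, map_mul, map_inv, map_zpow] at h
    exact h
  rw [zpow_neg] at h2
  have h3 := mul_inv_eq_one.mp h2
  exact mul_inv_eq_iff_eq_mul.mp h3

theorem bs_rel_zpow (p j : ℤ) : t p * a p ^ j = a p ^ (p * j) * t p := by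
  have h : SemiconjBy (t p) (a p) (a p ^ p) := bs_rel p
  have h2 := h.zpow_right j
  rw [← zpow_mul] at h2
  exact h2

theorem bs_rel_pow (p j : ℤ) (k : ℕ) : t p ^ k * a p ^ j = a p ^ (p ^ k * j) * t p ^ k := by
  induction k generalizing j with
  | zero => simp
  | succ k ih =>
    rw [pow_succ, mul_assoc, bs_rel_zpow, ← mul_assoc, ih, mul_assoc, ← pow_succ, pow_succ p,
      mul_assoc]

/-- The group element `t⁻ⁱ aᵐ tᵏ`. -/
def bsE (p : ℤ) (i : ℕ) (m : ℤ) (k : ℕ) : BaumslagSolitar p :=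
  ((t p)⁻¹) ^ i * a p ^ m * t p ^ k

/-- The normality condition. -/
def bsNF (p : ℤ) (i : ℕ) (m : ℤ) (k : ℕ) : Prop := ¬ (p ∣ m) ∨ i = 0 ∨ k = 0

/-- The generator map. -/
def bsR (p : ℤ) : Fin 4 → BaumslagSolitar p := ![a p, (a p)⁻¹, t p, (t p)⁻¹]

/-- The inversion. -/
def bsI : Fin 4 → Fin 4 := ![1, 0, 3, 2]

/-- The normal form set. -/
def bsC (p : ℤ) : Set (List (Fin 4)) := {w : List (Fin 4) | ∃ (i k' : ℕ) (m : ℤ),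
          (¬ (p ∣ m) ∨ i = 0 ∨ k' = 0) ∧ w = bsWord i m k'}

theorem eval_bsWord (p : ℤ) (i : ℕ) (m : ℤ) (k : ℕ) :
    eval (bsR p) (bsWord i m k) = bsE p i m k := by
  unfold eval bsWord bsE
  have hm : ((if 0 ≤ m then List.replicate m.toNat (0 : Fin 4)
      else List.replicate (-m).toNat 1).map (bsR p)).prod = a p ^ m := by
    split_ifs with h
    · obtain ⟨n, rfl⟩ := Int.eq_ofNat_of_zero_le h
      simp [bsR]
    · obtain ⟨n, hn⟩ := Int.eq_ofNat_of_zero_le (show 0 ≤ -m by omega)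
      obtain rfl : m = -(n : ℤ) := by omega
      simp [bsR]
  rw [List.map_append, List.map_append, List.prod_append, List.prod_append, hm]
  simp [bsR]

theorem bsE_mul_a (p : ℤ) (i : ℕ) (m : ℤ) (k : ℕ) (j : ℤ) :
    bsE p i m k * a p ^ j = bsE p i (m + p ^ k * j) k := by
  unfold bsE
  rw [mul_assoc, bs_rel_pow, ← mul_assoc, mul_assoc _ (a p ^ m), ← zpow_add]

theorem bsE_mul_t (p : ℤ) (i : ℕ) (m : ℤ) (k : ℕ) :
    bsE p i m k * t p = bsE p i m (k + 1) := by
  unfold bsE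
  rw [mul_assoc, ← pow_succ]

theorem bsE_mul_tinv (p : ℤ) (i : ℕ) (m : ℤ) (k : ℕ) :
    bsE p i m (k + 1) * (t p)⁻¹ = bsE p i m k := by
  rw [← bsE_mul_t, mul_inv_cancel_right]

theorem bsE_red (p : ℤ) (i : ℕ) (m : ℤ) (k : ℕ) :
    bsE p (i + 1) (p * m) (k + 1) = bsE p i m k := by
  unfold bsE
  rw [pow_succ, pow_succ' (t p), mul_assoc _ _ (a p ^ _), mul_assoc, mul_assoc,
    ← mul_assoc (a p ^ _), ← bs_rel_zpow]
  simp [mul_assoc]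

theorem bsE_mul_tinv_zero (p : ℤ) (i : ℕ) (m : ℤ) :
    bsE p i m 0 * (t p)⁻¹ = bsE p (i + 1) (p * m) 0 := by
  rw [← bsE_red, bsE_mul_tinv]

/-- Affine representation on `ℚ`. -/
def bsF (p : ℤ) (hp : (p : ℚ) ≠ 0) : Bool → Equiv.Perm ℚ
  | false => Equiv.addRight (1 : ℚ)
  | true => Equiv.mulRight₀ (p : ℚ) hp

theorem addRight_zpow (n : ℤ) (x : ℚ) : ((Equiv.addRight (1 : ℚ)) ^ n) x = x + n := by
  simp

theorem bsF_rel (p : ℤ) (hp : (p : ℚ) ≠ 0) : ∀ r ∈ ({FreeGroup.of true * FreeGroup.of false *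
    (FreeGroup.of true)⁻¹ * (FreeGroup.of false) ^ (-p)} : Set (FreeGroup Bool)),
    FreeGroup.lift (bsF p hp) r = 1 := by
  intro r hr
  rw [Set.mem_singleton_iff] at hr
  subst hr
  rw [map_mul, map_mul, map_mul, map_inv, map_zpow, FreeGroup.lift_apply_of,
    FreeGroup.lift_apply_of, zpow_neg, mul_inv_eq_one, mul_inv_eq_iff_eq_mul]
  ext x
  simp only [bsF, Equiv.Perm.mul_apply, addRight_zpow]
  simp
  ring

/-- The representation as a homomorphism. -/
def bsH (p : ℤ) (hp : (p : ℚ) ≠ 0) : BaumslagSolitar p →* Equiv.Perm ℚ :=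
  PresentedGroup.toGroup (bsF_rel p hp)

theorem bsH_a (p : ℤ) (hp : (p : ℚ) ≠ 0) : bsH p hp (a p) = Equiv.addRight (1 : ℚ) :=
  PresentedGroup.toGroup.of (bsF_rel p hp)

theorem bsH_t (p : ℤ) (hp : (p : ℚ) ≠ 0) : bsH p hp (t p) = Equiv.mulRight₀ (p : ℚ) hp :=
  PresentedGroup.toGroup.of (bsF_rel p hp)

theorem mulRight_pow (q : ℚ) (hq : q ≠ 0) (n : ℕ) (x : ℚ) :
    ((Equiv.mulRight₀ q hq) ^ n) x = x * q ^ n := by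
  induction n generalizing x with
  | zero => simp
  | succ n ih => rw [pow_succ, Equiv.Perm.mul_apply, ih]; simp; ring

theorem bsH_E (p : ℤ) (hp : (p : ℚ) ≠ 0) (i : ℕ) (m : ℤ) (k : ℕ) (x : ℚ) :
    (bsH p hp (bsE p i m k)) x * (p : ℚ) ^ i = x * (p : ℚ) ^ k + m := by
  unfold bsE
  rw [map_mul, map_mul, map_pow, map_pow, map_inv, map_zpow, bsH_a, bsH_t, inv_pow]
  rw [Equiv.Perm.mul_apply, Equiv.Perm.mul_apply, addRight_zpow, mulRight_pow]
  rw [← mulRight_pow (p : ℚ) hp i, ← Equiv.Perm.mul_apply, mul_inv_cancel, Equiv.Perm.one_apply]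

theorem bsE_inj_aux (p : ℤ) (hp : 2 ≤ p) {i i' k k' : ℕ} {m m' : ℤ}
    (h' : bsNF p i' m' k') (he : bsE p i m k = bsE p i' m' k') (hle : i ≤ i') :
    i = i' ∧ m = m' ∧ k = k' := by
  have hp0 : (p : ℚ) ≠ 0 := by exact_mod_cast (by omega : p ≠ 0)
  obtain ⟨d, rfl⟩ := Nat.exists_eq_add_of_le hle
  have key : ∀ x : ℚ, (x * (p : ℚ) ^ k + m) * (p : ℚ) ^ d = x * (p : ℚ) ^ k' + m' := by
    intro x
    rw [← bsH_E p hp0 i m k x, ← bsH_E p hp0 (i + d) m' k' x, he, pow_add]; ring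
  have h0 := key 0
  have h1 := key 1
  have hm : m * p ^ d = m' := by
    have : (m : ℚ) * (p : ℚ) ^ d = m' := by simpa using h0
    exact_mod_cast this
  have hk : p ^ (k + d) = p ^ k' := by
    have : (p : ℚ) ^ (k + d) = (p : ℚ) ^ k' := by
      rw [pow_add]; linarith
    exact_mod_cast this
  have hk' : k + d = k' := by
    have hh : p.natAbs ^ (k + d) = p.natAbs ^ k' := by
      rw [← Int.natAbs_pow, hk, Int.natAbs_pow]
    exact Nat.pow_right_injective (show 2 ≤ p.natAbs by omega) hh
  have hd : d = 0 := by
    by_contra hd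
    rcases h' with h | h | h
    · exact h (hm ▸ (dvd_pow_self p hd).mul_left m)
    · omega
    · omega
  subst hd
  simp at hm hk'
  exact ⟨rfl, hm, hk'⟩

theorem bsE_inj (p : ℤ) (hp : 2 ≤ p) {i i' k k' : ℕ} {m m' : ℤ} (h : bsNF p i m k)
    (h' : bsNF p i' m' k') (he : bsE p i m k = bsE p i' m' k') :
    i = i' ∧ m = m' ∧ k = k' := by
  rcases le_total i i' with hl | hl
  · exact bsE_inj_aux p hp h' he hl
  · obtain ⟨h1, h2, h3⟩ := bsE_inj_aux p hp h he.symm hl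
    exact ⟨h1.symm, h2.symm, h3.symm⟩

/-- `g` has a normal form. -/
def bsHas (p : ℤ) (g : BaumslagSolitar p) : Prop :=
  ∃ (x : ℕ × ℤ × ℕ), bsNF p x.1 x.2.1 x.2.2 ∧ g = bsE p x.1 x.2.1 x.2.2

theorem dvd_shift (p : ℤ) (m j : ℤ) (k : ℕ) : p ∣ m + p ^ (k + 1) * j ↔ p ∣ m := by
  rw [pow_succ', mul_assoc]; simp

theorem bsNF_shift (p : ℤ) (i : ℕ) (m : ℤ) (k : ℕ) (h : bsNF p i m k) (j : ℤ) :
    bsNF p i (m + p ^ k * j) k := by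
  cases k with
  | zero => right; right; rfl
  | succ k =>
    unfold bsNF at *
    rwa [dvd_shift]

theorem bsHas_a (p : ℤ) (g : BaumslagSolitar p) (h : bsHas p g) (j : ℤ) :
    bsHas p (g * a p ^ j) := by
  obtain ⟨⟨i, m, k⟩, hN, rfl⟩ := h
  exact ⟨⟨i, m + p ^ k * j, k⟩, bsNF_shift p i m k hN j, bsE_mul_a p i m k j⟩

theorem bsHas_t (p : ℤ) (g : BaumslagSolitar p) (h : bsHas p g) : bsHas p (g * t p) := by
  obtain ⟨⟨i, m, k⟩, hN, rfl⟩ := h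
  simp only at *
  rw [bsE_mul_t]
  by_cases h2 : bsNF p i m (k + 1)
  · exact ⟨⟨i, m, k + 1⟩, h2, rfl⟩
  · unfold bsNF at h2 hN
    push Not at h2
    obtain ⟨⟨m, rfl⟩, hi, -⟩ := h2
    obtain ⟨i, rfl⟩ := Nat.exists_eq_succ_of_ne_zero hi
    obtain rfl : k = 0 := by
      rcases hN with h | h | h
      · exact absurd (dvd_mul_right p m) h
      · omega
      · exact h
    exact ⟨⟨i, m, 0⟩, Or.inr (Or.inr rfl), bsE_red p i m 0⟩

theorem bsHas_tinv (p : ℤ) (g : BaumslagSolitar p) (h : bsHas p g) :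
    bsHas p (g * (t p)⁻¹) := by
  obtain ⟨⟨i, m, k⟩, hN, rfl⟩ := h
  simp only at *
  cases k with
  | zero => exact ⟨⟨i + 1, p * m, 0⟩, Or.inr (Or.inr rfl), bsE_mul_tinv_zero p i m⟩
  | succ k =>
    refine ⟨⟨i, m, k⟩, ?_, bsE_mul_tinv p i m k⟩
    rcases hN with h | h | h
    · exact Or.inl h
    · exact Or.inr (Or.inl h)
    · omega

/-- The quotient map. -/
def bsMk (p : ℤ) : FreeGroup Bool →* BaumslagSolitar p := PresentedGroup.mk _

theorem bsHas_word (p : ℤ) (g : BaumslagSolitar p) (h : bsHas p g) (f : FreeGroup Bool) :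
    bsHas p (g * bsMk p f) := by
  induction f using FreeGroup.induction_on generalizing g with
  | C1 => rw [map_one, mul_one]; exact h
  | of b =>
    cases b with
    | false =>
      have := bsHas_a p g h 1
      rw [zpow_one] at this
      exact this
    | true => exact bsHas_t p g h
  | inv_of b _ =>
    rw [map_inv]
    cases b with
    | false =>
      have := bsHas_a p g h (-1)
      rw [zpow_neg_one] at this
      exact this
    | true => exact bsHas_tinv p g h
  | mul x y hx hy =>
    rw [map_mul]
    have := hy _ (hx g h)
    rw [mul_assoc] at this
    exact this

theorem bsHas_all (p : ℤ) (g : BaumslagSolitar p) : bsHas p g := by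
  obtain ⟨f, rfl⟩ := PresentedGroup.mk_surjective _ g
  have h1 : bsHas p 1 := ⟨⟨0, 0, 0⟩, Or.inr (Or.inl rfl), by simp [bsE]⟩
  have := bsHas_word p 1 h1 f
  rw [one_mul] at this
  exact this

theorem bs_isNormalFormSet (p : ℤ) (hp : 2 ≤ p) : IsNormalFormSet (bsR p) (bsC p) := by
  intro g
  obtain ⟨⟨i, m, k⟩, hN, rfl⟩ := bsHas_all p g
  refine ⟨bsWord i m k, ⟨⟨i, k, m, hN, rfl⟩, eval_bsWord p i m k⟩, ?_⟩
  rintro w ⟨⟨i', k', m', hN', rfl⟩, he⟩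
  rw [eval_bsWord] at he
  obtain ⟨rfl, rfl, rfl⟩ := bsE_inj p hp hN' hN he
  rfl

/-- Rank of an edge. -/
noncomputable def bsMu (p : ℤ) (e : BaumslagSolitar p × Fin 4) : ℕ :=
  if e.2 = 0 ∨ e.2 = 1 then (bsHas_all p e.1).choose.2.2
  else (bsHas_all p e.1).choose.2.1.natAbs

theorem bsHas_choose (p : ℤ) (hp : 2 ≤ p) (i : ℕ) (m : ℤ) (k : ℕ) (h : bsNF p i m k) :
    (bsHas_all p (bsE p i m k)).choose = (i, m, k) := by
  obtain ⟨h1, h2⟩ := (bsHas_all p (bsE p i m k)).choose_spec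
  obtain ⟨h3, h4, h5⟩ := bsE_inj p hp h h1 h2
  ext
  · exact h3.symm
  · exact h4.symm
  · exact h5.symm

theorem bsMu_a (p : ℤ) (hp : 2 ≤ p) (i : ℕ) (m : ℤ) (k : ℕ) (h : bsNF p i m k) (x : Fin 4)
    (hx : x = 0 ∨ x = 1) : bsMu p (bsE p i m k, x) = k := by
  unfold bsMu
  rw [if_pos hx, bsHas_choose p hp i m k h]

theorem bsMu_t (p : ℤ) (hp : 2 ≤ p) (i : ℕ) (m : ℤ) (k : ℕ) (h : bsNF p i m k) (x : Fin 4)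
    (hx : ¬ (x = 0 ∨ x = 1)) : bsMu p (bsE p i m k, x) = m.natAbs := by
  unfold bsMu
  rw [if_neg hx, bsHas_choose p hp i m k h]

theorem edge_cons {G A : Type*} [Group G] (ρ : A → G) (g : G) (x : A) (w : List A) (e : G × A)
    (h : EdgeOnPath ρ g (x :: w) e) : e = (g, x) ∨ EdgeOnPath ρ (g * ρ x) w e := by
  obtain ⟨⟨i, hi⟩, rfl⟩ := h
  cases i with
  | zero => left; simp [eval]
  | succ i =>
    right
    refine ⟨⟨i, by simpa using hi⟩, ?_⟩
    simp [eval, mul_assoc]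

theorem edge_nil {G A : Type*} [Group G] (ρ : A → G) (g : G) (e : G × A)
    (h : EdgeOnPath ρ g [] e) : False := by
  obtain ⟨⟨i, hi⟩, rfl⟩ := h
  simp at hi

theorem edge_rep {G A : Type*} [Group G] (ρ : A → G) (g : G) (x : A) (n : ℕ) (w : List A)
    (e : G × A) (h : EdgeOnPath ρ g (List.replicate n x ++ w) e) :
    (∃ j : ℕ, e = (g * ρ x ^ j, x)) ∨ EdgeOnPath ρ (g * ρ x ^ n) w e := by
  induction n generalizing g with
  | zero => right; simpa using h
  | succ n ih =>
    rw [List.replicate_succ, List.cons_append] at h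
    rcases edge_cons ρ g x _ e h with h | h
    · left; exact ⟨0, by simpa using h⟩
    · rcases ih _ h with ⟨j, hj⟩ | h
      · left; exact ⟨j + 1, by rw [hj, pow_succ', mul_assoc]⟩
      · right; rwa [pow_succ', ← mul_assoc]

/-- Degeneracy for our structure. -/
def bsD (p : ℤ) (e : BaumslagSolitar p × Fin 4) : Prop := IsDegenerate (bsR p) bsI (bsC p) e

theorem bsD_of (p : ℤ) (i : ℕ) (m : ℤ) (k : ℕ) (i' : ℕ) (m' : ℤ) (k' : ℕ) (x : Fin 4)
    (h : bsNF p i m k) (h' : bsNF p i' m' k') (he : bsE p i m k * bsR p x = bsE p i' m' k')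
    (hw : bsWord i m k ++ [x] = bsWord i' m' k' ∨ bsWord i m k = bsWord i' m' k' ++ [bsI x]) :
    bsD p (bsE p i m k, x) :=
  ⟨bsWord i m k, bsWord i' m' k', ⟨i, k, m, h, rfl⟩, eval_bsWord p i m k, ⟨i', k', m', h', rfl⟩,
    by rw [eval_bsWord, he], hw⟩

theorem bsWord_succ_k (i : ℕ) (m : ℤ) (k : ℕ) : bsWord i m (k + 1) = bsWord i m k ++ [2] := by
  simp [bsWord, List.replicate_succ']

theorem bsWord_succ_m (i : ℕ) (m : ℤ) (h : 0 ≤ m) : bsWord i (m + 1) 0 = bsWord i m 0 ++ [0] := by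
  obtain ⟨n, rfl⟩ := Int.eq_ofNat_of_zero_le h
  unfold bsWord
  rw [if_pos h, if_pos (by omega), show ((n : ℤ) + 1).toNat = n + 1 by omega]
  simp [List.replicate_succ']

theorem bsWord_pred_m (i : ℕ) (m : ℤ) (h : m ≤ 0) : bsWord i (m - 1) 0 = bsWord i m 0 ++ [1] := by
  obtain ⟨n, hn⟩ := Int.eq_ofNat_of_zero_le (show 0 ≤ -m by omega)
  obtain rfl : m = -(n : ℤ) := by omega
  unfold bsWord
  rw [if_neg (by omega), show (-(-(n : ℤ) - 1)).toNat = n + 1 by omega]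
  split_ifs with h0
  · obtain rfl : n = 0 := by omega
    simp
  · simp [List.replicate_succ']

theorem bsWord_succ_i (i : ℕ) : bsWord (i + 1) 0 0 = bsWord i 0 0 ++ [3] := by
  simp [bsWord, List.replicate_succ']

theorem bsNF_zero (p : ℤ) (i : ℕ) (m : ℤ) : bsNF p i m 0 := Or.inr (Or.inr rfl)

theorem bsR_zero (p : ℤ) : bsR p 0 = a p ^ (1 : ℤ) := by simp [bsR]
theorem bsR_one (p : ℤ) : bsR p 1 = a p ^ (-1 : ℤ) := by simp [bsR]
theorem bsR_two (p : ℤ) : bsR p 2 = t p := rfl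
theorem bsR_three (p : ℤ) : bsR p 3 = (t p)⁻¹ := rfl

theorem bsD_a (p : ℤ) (i : ℕ) (m : ℤ) (x : Fin 4) (hx : x = 0 ∨ x = 1) :
    bsD p (bsE p i m 0, x) := by
  rcases hx with rfl | rfl
  · apply bsD_of p i m 0 i (m + 1) 0 0 (bsNF_zero _ _ _) (bsNF_zero _ _ _)
    · rw [bsR_zero, bsE_mul_a]; simp
    · rcases le_or_gt 0 m with h | h
      · left; rw [bsWord_succ_m i m h]
      · right
        have := bsWord_pred_m i (m + 1) (by omega)
        rw [add_sub_cancel_right] at this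
        exact this
  · apply bsD_of p i m 0 i (m - 1) 0 1 (bsNF_zero _ _ _) (bsNF_zero _ _ _)
    · rw [bsR_one, bsE_mul_a]; simp [sub_eq_add_neg]
    · rcases le_or_gt m 0 with h | h
      · left; rw [bsWord_pred_m i m h]
      · right
        have := bsWord_succ_m i (m - 1) (by omega)
        rw [sub_add_cancel] at this
        exact this

theorem bsNF_pred (p : ℤ) (i : ℕ) (m : ℤ) (k : ℕ) (h : bsNF p i m (k + 1)) : bsNF p i m k := by
  rcases h with h | h | h
  · exact Or.inl h
  · exact Or.inr (Or.inl h)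
  · omega

theorem bsD_t (p : ℤ) (i : ℕ) (m : ℤ) (k : ℕ) (h : bsNF p i m (k + 1)) :
    bsD p (bsE p i m k, 2) :=
  bsD_of p i m k i m (k + 1) 2 (bsNF_pred p i m k h) h (bsE_mul_t p i m k)
    (Or.inl (bsWord_succ_k i m k).symm)

theorem bsD_tinv (p : ℤ) (i : ℕ) (m : ℤ) (k : ℕ) (h : bsNF p i m (k + 1)) :
    bsD p (bsE p i m (k + 1), 3) :=
  bsD_of p i m (k + 1) i m k 3 h (bsNF_pred p i m k h) (bsE_mul_tinv p i m k)
    (Or.inr (bsWord_succ_k i m k))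

theorem bsD_t_zero (p : ℤ) (i : ℕ) : bsD p (bsE p (i + 1) 0 0, 2) := by
  refine bsD_of p (i + 1) 0 0 i 0 0 2 (bsNF_zero _ _ _) (bsNF_zero _ _ _) ?_
    (Or.inr (bsWord_succ_i i))
  rw [bsR_two, bsE_mul_t, ← bsE_red p i 0 0, mul_zero]

theorem bsD_tinv_zero (p : ℤ) (i : ℕ) : bsD p (bsE p i 0 0, 3) := by
  refine bsD_of p i 0 0 (i + 1) 0 0 3 (bsNF_zero _ _ _) (bsNF_zero _ _ _) ?_
    (Or.inl (bsWord_succ_i i).symm)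
  rw [bsR_three, bsE_mul_tinv_zero, mul_zero]

/-- The stacking property with the rank. -/
theorem bs_step (p : ℤ) (hp : 2 ≤ p) (g : BaumslagSolitar p) (x : Fin 4) (hD : ¬ bsD p (g, x)) :
    ∃ w : List (Fin 4), w.length ≤ p.toNat + 2 ∧ eval (bsR p) w = bsR p x ∧
      ∀ e', EdgeOnPath (bsR p) g w e' → bsD p e' ∨ bsMu p e' < bsMu p (g, x) := by
  obtain ⟨n, rfl⟩ := Int.eq_ofNat_of_zero_le (show 0 ≤ p by omega)
  obtain ⟨⟨i, m, k⟩, hN, rfl⟩ := bsHas_all n g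
  simp only at *
  set p : ℤ := (n : ℤ) with hpn
  by_cases hx : x = 0 ∨ x = 1
  · obtain ⟨ε, hε⟩ : ∃ ε : ℤ, bsR p x = a p ^ ε := by
      rcases hx with rfl | rfl
      · exact ⟨1, bsR_zero p⟩
      · exact ⟨-1, bsR_one p⟩
    cases k with
    | zero => exact absurd (bsD_a p i m x hx) hD
    | succ k =>
      refine ⟨3 :: (List.replicate n x ++ [2]), by simp [hpn], ?_, ?_⟩
      · simp only [eval, List.map_cons, List.prod_cons, List.map_append, List.map_replicate,
          List.prod_append, List.prod_replicate, List.map_nil, List.prod_nil, mul_one, hε]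
        rw [bsR_two, bsR_three, ← zpow_natCast, ← zpow_mul, mul_comm ε, ← hpn, ← bs_rel_zpow,
          inv_mul_cancel_left]
      · intro e he
        have hN' := bsNF_pred p i m k hN
        rcases edge_cons _ _ _ _ _ he with rfl | he
        · left; exact bsD_tinv p i m k hN
        rw [bsR_three, bsE_mul_tinv] at he
        rcases edge_rep _ _ _ _ _ _ he with ⟨j, rfl⟩ | he
        · right
          rw [hε, ← zpow_natCast, ← zpow_mul, bsE_mul_a,
            bsMu_a p hp _ _ _ (bsNF_shift p _ _ _ hN' _) x hx, bsMu_a p hp _ _ _ hN x hx]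
          omega
        · rcases edge_cons _ _ _ _ _ he with rfl | he
          · left
            rw [hε, ← zpow_natCast, ← zpow_mul, bsE_mul_a]
            apply bsD_t
            have := bsNF_shift p _ _ _ hN ε
            rw [pow_succ, mul_assoc] at this
            rwa [mul_comm ε]
          · exact (edge_nil _ _ _ he).elim
  · have hx2 : x = 2 ∨ x = 3 := by
      clear hD; revert hx; revert x; decide
    have hfacts : k = 0 ∧ m ≠ 0 ∧ (x = 2 → p ∣ m ∧ i ≠ 0) := by
      rcases hx2 with rfl | rfl
      · have h2 : ¬ bsNF p i m (k + 1) := fun h => hD (bsD_t p i m k h)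
        unfold bsNF at h2 hN
        push Not at h2
        obtain ⟨hd, hi, -⟩ := h2
        have hk : k = 0 := by
          rcases hN with h | h | h
          · exact absurd hd h
          · exact absurd h hi
          · exact h
        refine ⟨hk, ?_, fun _ => ⟨hd, hi⟩⟩
        rintro rfl
        subst hk
        obtain ⟨i, rfl⟩ := Nat.exists_eq_succ_of_ne_zero hi
        exact hD (bsD_t_zero p i)
      · have hk : k = 0 := by
          cases k with
          | zero => rfl
          | succ k => exact absurd (bsD_tinv p i m k hN) hD
        refine ⟨hk, ?_, fun h => absurd h (by decide)⟩
        rintro rfl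
        subst hk
        exact hD (bsD_tinv_zero p i)
    obtain ⟨rfl, hm, hdvd⟩ := hfacts
    obtain ⟨s, s', ε, hs, hs', hR, hR', hε⟩ : ∃ (s s' : Fin 4) (ε : ℤ), (s = 0 ∨ s = 1) ∧
        (s' = 0 ∨ s' = 1) ∧ bsR p s = a p ^ (-ε) ∧ bsR p s' = a p ^ ε ∧
        ((ε = 1 ∧ 0 < m) ∨ (ε = -1 ∧ m < 0)) := by
      rcases lt_or_gt_of_ne hm with h | h
      · exact ⟨0, 1, -1, by simp, by simp, by rw [bsR_zero]; rfl, bsR_one p, Or.inr ⟨rfl, h⟩⟩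
      · exact ⟨1, 0, 1, by simp, by simp, bsR_one p, bsR_zero p, Or.inl ⟨rfl, h⟩⟩
    have hpow : ∀ (g : BaumslagSolitar p) (c : ℤ) (j : ℕ), g * (a p ^ c) ^ j = g * a p ^ (c * j) := by
      intro g c j
      rw [← zpow_natCast, ← zpow_mul]
    rcases hx2 with rfl | rfl
    · obtain ⟨⟨m, rfl⟩, hi⟩ := hdvd rfl
      obtain ⟨i, rfl⟩ := Nat.exists_eq_succ_of_ne_zero hi
      refine ⟨List.replicate n s ++ [2, s'], by simp [hpn], ?_, ?_⟩
      · simp only [eval, List.map_cons, List.prod_cons, List.map_append, List.map_replicate,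
          List.prod_append, List.prod_replicate, List.map_nil, List.prod_nil, mul_one, hR, hR']
        rw [bsR_two, bs_rel_zpow, ← mul_assoc, ← zpow_natCast, ← zpow_mul, ← zpow_add, ← hpn]
        have : -ε * p + p * ε = 0 := by ring
        rw [this, zpow_zero, one_mul]
      · intro e he
        rcases edge_rep _ _ _ _ _ _ he with ⟨j, rfl⟩ | he
        · left
          rw [hR, hpow, bsE_mul_a]
          exact bsD_a p _ _ s hs
        rw [hR, hpow, bsE_mul_a, ← hpn] at he
        have e1 : p * m + p ^ 0 * (-ε * p) = p * (m - ε) := by ring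
        rw [e1] at he
        rcases edge_cons _ _ _ _ _ he with rfl | he
        · right
          rw [bsMu_t p hp _ _ _ (bsNF_zero _ _ _) 2 hx, bsMu_t p hp _ _ _ (bsNF_zero _ _ _) 2 hx,
            Int.natAbs_mul, Int.natAbs_mul]
          apply Nat.mul_lt_mul_of_pos_left _ (by omega)
          have hp0 : 0 < p := by omega
          rcases hε with ⟨rfl, h⟩ | ⟨rfl, h⟩
          · have : 0 < m := pos_of_mul_pos_right h hp0.le
            omega
          · have : m < 0 := by nlinarith
            omega
        rw [bsR_two, bsE_mul_t, bsE_red] at he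
        rcases edge_cons _ _ _ _ _ he with rfl | he
        · left; exact bsD_a p _ _ s' hs'
        · exact (edge_nil _ _ _ he).elim
    · refine ⟨s :: 3 :: (List.replicate n s' ++ []), by simp [hpn], ?_, ?_⟩
      · simp only [eval, List.map_cons, List.prod_cons, List.map_append, List.map_replicate,
          List.prod_append, List.prod_replicate, List.map_nil, List.prod_nil, mul_one, hR, hR']
        have h := bs_rel_zpow p ε
        rw [bsR_three, ← zpow_natCast, ← zpow_mul, ← hpn, mul_comm ε, zpow_neg,
          eq_mul_inv_of_mul_eq h.symm]
        group
      · intro e he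
        rcases edge_cons _ _ _ _ _ he with rfl | he
        · left; exact bsD_a p _ _ s hs
        rw [hR, bsE_mul_a] at he
        rcases edge_cons _ _ _ _ _ he with rfl | he
        · right
          rw [bsMu_t p hp _ _ _ (bsNF_zero _ _ _) 3 hx, bsMu_t p hp _ _ _ (bsNF_zero _ _ _) 3 hx,
            pow_zero, one_mul]
          omega
        rw [bsR_three, bsE_mul_tinv_zero] at he
        rcases edge_rep _ _ _ _ _ _ he with ⟨j, rfl⟩ | he
        · left
          rw [hR', hpow, bsE_mul_a]
          exact bsD_a p _ _ s' hs'
        · exact (edge_nil _ _ _ he).elim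

end Aux

/-- for `p ≥ 2`, the pair `(BS(1, p), {a, a⁻¹, t, t⁻¹})` is stackable with
normal form set `{t⁻ⁱ aᵐ tᵏ : p ∤ m or i = 0 or k = 0}`. -/
theorem baumslagSolitar_stackable (p : ℤ) (hp : 2 ≤ p) :
    ∃ (lt : BaumslagSolitar p × Fin 4 → BaumslagSolitar p × Fin 4 → Prop) (k : ℕ),
      IsStackableStructure
        (![BaumslagSolitar.a p, (BaumslagSolitar.a p)⁻¹,
           BaumslagSolitar.t p, (BaumslagSolitar.t p)⁻¹])
        (![1, 0, 3, 2])
        {w : List (Fin 4) | ∃ (i k' : ℕ) (m : ℤ),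
          (¬ (p ∣ m) ∨ i = 0 ∨ k' = 0) ∧ w = bsWord i m k'}
        lt k := by
  change ∃ lt k, IsStackableStructure (bsR p) bsI (bsC p) lt k
  refine ⟨fun e e' => ¬ bsD p e ∧ ¬ bsD p e' ∧ bsMu p e < bsMu p e', p.toNat + 2,
    ⟨0, 0, 0, Or.inr (Or.inl rfl), by simp [bsWord]⟩, bs_isNormalFormSet p hp,
    fun e e' h => ⟨h.1, h.2.1⟩, fun e e' e'' h h' => ⟨h.1, h'.2.1, h.2.2.trans h'.2.2⟩, ?_, ?_⟩
  · exact Subrelation.wf (fun h => h.2.2) (measure (bsMu p)).wf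
  · intro g x
    by_cases hD : bsD p (g, x)
    · refine ⟨[x], by simp, by simp [eval], ?_⟩
      intro e he
      rcases edge_cons _ _ _ _ _ he with rfl | he
      · exact Or.inl hD
      · exact (edge_nil _ _ _ he).elim
    · obtain ⟨w, h1, h2, h3⟩ := bs_step p hp g x hD
      refine ⟨w, h1, h2, fun e he => ?_⟩
      by_cases hDe : bsD p e
      · exact Or.inl hDe
      · exact Or.inr ⟨hDe, hD, (h3 e he).resolve_left hDe⟩

end Stk
end

section
/- Let A be a four-element alphabet {x₀, X₀, x₁, X₁} (where X₀, X₁ stand for the formal inverses x₀⁻¹, x₁⁻¹), and for w ∈ List A let σ(w) denote the number of occurrences of x₀ in w minus the number of occurrences of X₀ in w. Let U := { [x₀,X₀], [X₀,x₀], [x₁,X₁], [X₁,x₁], [x₀,x₀,x₁], [x₀,x₀,X₁] }. Then the language C := { w ∈ List A : no word of U occurs as a contiguous sublist of w, and every prefix w′ of w satisfies σ(w′) ≤ 0 } is a context-free language (Language.IsContextFree). (C is the normal form set of the stackable structure for Thompson's group F constructed in [CHST]; the paper proves the stronger fact that C is deterministic context-free, being the intersection of a regular language with a deterministic context-free language.)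 -/
namespace ThompsonCF

/-- Soundness of an interpretation of the nonterminals of a grammar by languages. -/
def sem {T N : Type} (L : N → Language T) : Symbol T N → Language T
  | .terminal a => ({[a]} : Set (List T))
  | .nonterminal n => L n

lemma sem_terminal {T N : Type} (L : N → Language T) (w : List T) :
    w ∈ ((w.map Symbol.terminal).map (sem L)).prod := by
  induction w with
  | nil => exact Language.nil_mem_one
  | cons a w ih =>
    simp only [List.map_cons, List.prod_cons]
    exact Language.mem_mul.2 ⟨[a], rfl, w, ih, rfl⟩

lemma sem_terminal_eq {T N : Type} (L : N → Language T) (w v : List T) :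
    v ∈ ((w.map Symbol.terminal).map (sem L)).prod → v = w := by
  induction w generalizing v with
  | nil => intro h; exact h
  | cons a w ih =>
    simp only [List.map_cons, List.prod_cons]
    intro h
    obtain ⟨x, hx, y, hy, rfl⟩ := Language.mem_mul.1 h
    rw [ih y hy, (show x = [a] from hx)]; rfl

lemma sound {T : Type} (g : ContextFreeGrammar T) (L : g.NT → Language T)
    (hL : ∀ r ∈ g.rules, (r.output.map (sem L)).prod ≤ L r.input)
    (u : List (Symbol T g.NT)) (w : List T) (h : g.Derives u (w.map Symbol.terminal)) :
    w ∈ (u.map (sem L)).prod := by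
  induction h using Relation.ReflTransGen.head_induction_on with
  | refl => exact sem_terminal L w
  | head h1 _ ih =>
    obtain ⟨r, hr, hrw⟩ := h1
    obtain ⟨p, q, rfl, rfl⟩ := hrw.exists_parts
    simp only [List.map_append, List.prod_append, List.map_cons, List.map_nil, List.prod_cons,
      List.prod_nil, mul_one] at ih ⊢
    obtain ⟨x, hx, y, hy, rfl⟩ := Language.mem_mul.1 ih
    obtain ⟨x1, hx1, x2, hx2, rfl⟩ := Language.mem_mul.1 hx
    exact Language.mem_mul.2 ⟨_, Language.mem_mul.2 ⟨x1, hx1, x2, hL r hr hx2, rfl⟩, y, hy, rfl⟩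

/-- weight of a letter -/
def wt (a : Fin 4) : ℤ := if a = 0 then 1 else if a = 1 then -1 else 0

/-- exponent sum -/
def sg (w : List (Fin 4)) : ℤ := (w.map wt).sum

/-- all prefixes have sum at most `n` -/
def ok : ℤ → List (Fin 4) → Prop
  | n, [] => 0 ≤ n
  | n, a :: w => 0 ≤ n ∧ ok (n - wt a) w

lemma ok_nonneg {n : ℤ} {w} (h : ok n w) : 0 ≤ n := by
  cases w with
  | nil => exact h
  | cons a w => exact h.1

lemma ok_mono {n m : ℤ} {w} (h : ok n w) (hm : n ≤ m) : ok m w := by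
  induction w generalizing n m with
  | nil => exact le_trans h hm
  | cons a w ih => exact ⟨le_trans h.1 hm, ih h.2 (by omega)⟩

lemma ok_append {n : ℤ} {u v} (hu : ok n u) (hv : ok (n - sg u) v) : ok n (u ++ v) := by
  induction u generalizing n with
  | nil => simpa [sg] using hv
  | cons a u ih =>
    refine ⟨hu.1, ih hu.2 ?_⟩
    simp only [sg, List.map_cons, List.sum_cons] at hv ⊢
    rwa [sub_sub]

lemma sg_eq (p : List (Fin 4)) : (p.count 0 : ℤ) - (p.count 1 : ℤ) = sg p := by
  induction p with
  | nil => rfl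
  | cons a p ih =>
    simp only [sg, List.map_cons, List.sum_cons] at ih ⊢
    rw [← ih]
    fin_cases a <;> simp [wt, List.count_cons] <;> omega

lemma ok_iff (n : ℤ) (w : List (Fin 4)) :
    ok n w ↔ ∀ p : List (Fin 4), p <+: w → ((p.count 0 : ℤ) - (p.count 1 : ℤ)) ≤ n := by
  simp only [sg_eq]
  induction w generalizing n with
  | nil => simp [ok, sg]
  | cons a w ih =>
    simp only [ok, ih]
    constructor
    · rintro ⟨h0, h⟩ p hp
      cases p with
      | nil => simpa [sg] using h0
      | cons b p =>
        obtain ⟨rfl, hp'⟩ := List.cons_prefix_cons.1 hp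
        have := h p hp'
        simp only [sg, List.map_cons, List.sum_cons] at this ⊢
        omega
    · intro h
      refine ⟨by simpa [sg] using h [] List.nil_prefix, fun p hp => ?_⟩
      have := h (a :: p) (List.cons_prefix_cons.2 ⟨rfl, hp⟩)
      simp only [sg, List.map_cons, List.sum_cons] at this ⊢
      omega

section
variable {Q : Type} (M : DFA (Fin 4) Q)

/-- acceptance with target -/
def acc : Option Q → Q → Prop
  | none, q => q ∈ M.accept
  | some r, q => q = r

/-- interpretation of nonterminals -/
def lang (n : Option Q × Q) : Language (Fin 4) :=
  {w | ok 0 w ∧ acc M n.1 (M.evalFrom n.2 w) ∧ (n.1 ≠ none → sg w = 0)}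

/-- grammar rules -/
inductive Rule : ContextFreeRule (Fin 4) (Option Q × Q) → Prop
  | eps (t q) (h : acc M t q) : Rule ⟨(t, q), []⟩
  | flat (t q) (a : Fin 4) (h : wt a = 0) :
      Rule ⟨(t, q), [.terminal a, .nonterminal (t, M.step q a)]⟩
  | push (q) : Rule ⟨(none, q), [.terminal 1, .nonterminal (none, M.step q 1)]⟩
  | pair (t q r) : Rule ⟨(t, q), [.terminal 1, .nonterminal (some r, M.step q 1),
      .terminal 0, .nonterminal (t, M.step r 0)]⟩

lemma rule_finite [Finite Q] : {r | Rule M r}.Finite := by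
  have h1 := Set.finite_range (fun x : Option Q × Q =>
    (⟨x, []⟩ : ContextFreeRule (Fin 4) (Option Q × Q)))
  have h2 := Set.finite_range (fun x : (Option Q × Q) × Fin 4 =>
    (⟨x.1, [.terminal x.2, .nonterminal (x.1.1, M.step x.1.2 x.2)]⟩ :
      ContextFreeRule (Fin 4) (Option Q × Q)))
  have h4 := Set.finite_range (fun x : (Option Q × Q) × Q =>
    (⟨x.1, [.terminal 1, .nonterminal (some x.2, M.step x.1.2 1),
      .terminal 0, .nonterminal (x.1.1, M.step x.2 0)]⟩ :
      ContextFreeRule (Fin 4) (Option Q × Q)))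
  refine ((h1.union h2).union h4).subset ?_
  rintro _ (⟨t, q, h⟩ | ⟨t, q, a, h⟩ | ⟨q⟩ | ⟨t, q, r⟩)
  · exact .inl (.inl ⟨(t, q), rfl⟩)
  · exact .inl (.inr ⟨((t, q), a), rfl⟩)
  · exact .inl (.inr ⟨((none, q), 1), rfl⟩)
  · exact .inr ⟨((t, q), r), rfl⟩

/-- the grammar -/
noncomputable def gram [Finite Q] : ContextFreeGrammar (Fin 4) where
  NT := Option Q × Q
  initial := (none, M.start)
  rules := (rule_finite M).toFinset

lemma rule_sound (r) (h : Rule M r) : (r.output.map (sem (lang M))).prod ≤ lang M r.input := by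
  intro w hw
  cases h with
  | eps t q h =>
    obtain rfl : w = [] := hw
    exact ⟨le_refl (0 : ℤ), h, fun _ => rfl⟩
  | flat t q a h =>
    simp only [List.map_cons, List.map_nil, List.prod_cons, List.prod_nil, mul_one] at hw
    obtain ⟨x, hx, y, hy, rfl⟩ := Language.mem_mul.1 hw
    obtain rfl : x = [a] := hx
    obtain ⟨h1, h2, h3⟩ := hy
    refine ⟨⟨le_refl _, ?_⟩, h2, fun ht => ?_⟩
    · simpa [h] using h1
    · have := h3 ht
      simp only [sg, List.map_cons, List.sum_cons, List.cons_append, List.nil_append] at this ⊢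
      omega
  | push q =>
    simp only [List.map_cons, List.map_nil, List.prod_cons, List.prod_nil, mul_one] at hw
    obtain ⟨x, hx, y, hy, rfl⟩ := Language.mem_mul.1 hw
    obtain rfl : x = [1] := hx
    obtain ⟨h1, h2, h3⟩ := hy
    exact ⟨⟨le_refl _, ok_mono h1 (by simp [wt])⟩, h2, fun ht => absurd rfl ht⟩
  | pair t q r =>
    simp only [List.map_cons, List.map_nil, List.prod_cons, List.prod_nil, mul_one] at hw
    obtain ⟨x, hx, y, hy, rfl⟩ := Language.mem_mul.1 hw
    obtain rfl : x = [1] := hx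
    obtain ⟨u, hu, z, hz, rfl⟩ := Language.mem_mul.1 hy
    obtain ⟨z1, hz1, v, hv, rfl⟩ := Language.mem_mul.1 hz
    obtain rfl : z1 = [0] := hz1
    obtain ⟨h1, h2, h3⟩ := hu
    obtain ⟨k1, k2, k3⟩ := hv
    have h3 := h3 (by simp)
    have h2 : M.evalFrom (M.step q 1) u = r := h2
    refine ⟨⟨le_refl _, ok_append (u := u) (v := 0 :: v) (ok_mono h1 (by simp [wt])) ⟨?_, ?_⟩⟩, ?_, fun ht => ?_⟩
    · rw [h3]; simp [wt]
    · rw [h3]; simpa [wt] using k1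
    · change acc M t (M.evalFrom (M.step q 1) (u ++ 0 :: v))
      rw [DFA.evalFrom_of_append, h2]
      exact k2
    · have := k3 ht
      simp [sg, wt] at this h3 ⊢
      omega

variable [Finite Q]

/-- derivable words -/
def Gen (t : Option Q) (q : Q) (w : List (Fin 4)) : Prop :=
  (gram M).Derives [.nonterminal (t, q)] (w.map Symbol.terminal)

lemma start_rule {n : Option Q × Q} {o} (h : Rule M ⟨n, o⟩) :
    (gram M).Derives [.nonterminal n] o :=
  ContextFreeGrammar.Produces.single
    ⟨⟨n, o⟩, (rule_finite M).mem_toFinset.2 h, ContextFreeRule.Rewrites.input_output⟩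

lemma gen_eps {t q} (h : acc M t q) : Gen M t q [] := start_rule M (.eps t q h)

lemma gen_flat {t q w} (a : Fin 4) (h : wt a = 0) (hw : Gen M t (M.step q a) w) :
    Gen M t q (a :: w) :=
  (start_rule M (.flat t q a h)).trans (hw.append_left [.terminal a])

lemma gen_push {q w} (hw : Gen M none (M.step q 1) w) : Gen M none q (1 :: w) :=
  (start_rule M (.push q)).trans (hw.append_left [.terminal 1])

lemma gen_pair {t q r u v} (hu : Gen M (some r) (M.step q 1) u) (hv : Gen M t (M.step r 0) v) :
    Gen M t q (1 :: (u ++ 0 :: v)) := by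
  refine (start_rule M (.pair t q r)).trans ?_
  have h1 := (hu.append_left [.terminal 1]).append_right
    [.terminal 0, .nonterminal (t, M.step r 0)]
  have h2 := hv.append_left (([.terminal 1] ++ u.map Symbol.terminal) ++ [.terminal 0])
  simp only [List.map_cons, List.map_append]
  simp only [List.append_assoc, List.cons_append, List.nil_append] at h1 h2
  exact h1.trans h2

/-- decomposition of a word -/
inductive Dec : ℕ → Q → List (Fin 4) → Prop
  | fin (n q w) (h : Gen M none q w) : Dec n q w
  | pop (n q r u v) (h : Gen M (some r) q u) (h' : Dec n (M.step r 0) v) :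
      Dec (n + 1) q (u ++ 0 :: v)

lemma dec (w : List (Fin 4)) (n : ℕ) (q : Q) (h : ok n w) (ha : M.evalFrom q w ∈ M.accept) :
    Dec M n q w := by
  induction w generalizing n q with
  | nil => exact .fin _ _ _ (gen_eps M ha)
  | cons a w ih =>
    have hflat : wt a = 0 → Dec M n q (a :: w) := by
      intro h0
      have := ih n (M.step q a) (by simpa [h0] using h.2) ha
      cases this with
      | fin _ _ _ h => exact .fin _ _ _ (gen_flat M a h0 h)
      | pop n _ r u v k k' => exact .pop n q r (a :: u) v (gen_flat M a h0 k) k'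
    have hcase : a = 0 ∨ a = 1 ∨ wt a = 0 := by
      clear hflat ha h; revert a; decide
    rcases hcase with rfl | rfl | h0
    · have h2 := h.2
      have := ok_nonneg h2
      simp only [wt, if_true] at this h2
      obtain ⟨m, rfl⟩ : ∃ m, n = m + 1 := ⟨n - 1, by omega⟩
      exact .pop m q q [] w (gen_eps M rfl) (ih m _ (by simpa using h2) ha)
    · have := ih (n + 1) (M.step q 1) (by simpa [wt] using h.2) ha
      cases this with
      | fin _ _ _ h => exact .fin _ _ _ (gen_push M h)
      | pop _ _ r u v j j' =>
        cases j' with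
        | fin _ _ _ k => exact .fin _ _ _ (gen_pair M j k)
        | pop n _ r' u' v' k k' =>
          have := Dec.pop n q r' _ v' (gen_pair M j k) k'
          simpa using this
    · exact hflat h0

lemma gram_language :
    (gram M).language = {w | w ∈ M.accepts ∧ ok 0 w} := by
  ext w
  constructor
  · intro h
    have := sound (gram M) (lang M)
      (fun r hr => rule_sound M r ((rule_finite M).mem_toFinset.1 hr)) _ w h
    simp only [List.map_cons, List.map_nil, List.prod_cons, List.prod_nil, mul_one] at this
    obtain ⟨h1, h2, _⟩ := this
    exact ⟨h2, h1⟩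
  · rintro ⟨h1, h2⟩
    have := dec M w 0 M.start h2 h1
    cases this with
    | fin _ _ _ h => exact h

end

/-- States: `0` nothing read, `1` after `x₀`, `2` after `x₀x₀`, `3` after `X₀`,
`4` after `x₁`, `5` after `X₁`, `6` sink. -/
def stp : Fin 7 → Fin 4 → Fin 7 :=
  ![![1, 3, 4, 5], ![2, 6, 4, 5], ![2, 6, 6, 6], ![6, 3, 4, 5], ![1, 3, 4, 6], ![1, 3, 6, 5],
    ![6, 6, 6, 6]]

/-- the automaton -/
def aut : DFA (Fin 4) (Fin 7) := ⟨stp, 0, {q | q ≠ 6}⟩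

/-- relevant context of a state -/
def ctx : Fin 7 → List (Fin 4) := ![[], [0], [0, 0], [1], [2], [3], [0, 1]]

/-- avoiding all forbidden words -/
def Avoid (w : List (Fin 4)) : Prop :=
  ∀ u ∈ ([[0, 1], [1, 0], [2, 3], [3, 2], [0, 0, 2], [0, 0, 3]] :
            List (List (Fin 4))), ¬ u <:+: w

lemma avoid_step (q : Fin 7) (a : Fin 4) (w : List (Fin 4)) :
    Avoid (ctx q ++ a :: w) ↔ Avoid (ctx (stp q a) ++ w) := by
  fin_cases q <;> fin_cases a <;>
    simp [Avoid, ctx, stp, List.infix_cons_iff, List.cons_prefix_cons]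

lemma avoid_iff (q : Fin 7) (w : List (Fin 4)) :
    aut.evalFrom q w ∈ aut.accept ↔ Avoid (ctx q ++ w) := by
  induction w generalizing q with
  | nil =>
    change q ≠ 6 ↔ _
    simp only [Avoid]
    revert q
    decide
  | cons a w ih =>
    rw [avoid_step, ← ih]
    rfl

end ThompsonCF

/-- over the four-letter alphabet `{x₀, X₀, x₁, X₁}` (encoded as `Fin 4`
with `0 ↦ x₀`, `1 ↦ X₀`, `2 ↦ x₁`, `3 ↦ X₁`), the normal form language for Thompson's
group `F` — words avoiding the forbidden factors
`x₀X₀, X₀x₀, x₁X₁, X₁x₁, x₀x₀x₁, x₀x₀X₁` all of whose prefixes have `x₀`-exponent sum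
at most `0` — is context-free. -/
theorem thompsonF_normalForm_language_isContextFree :
    Language.IsContextFree
      ({w : List (Fin 4) |
        (∀ u ∈ ([[0, 1], [1, 0], [2, 3], [3, 2], [0, 0, 2], [0, 0, 3]] :
            List (List (Fin 4))), ¬ u <:+: w) ∧
        ∀ p : List (Fin 4), p <+: w →
          ((p.count 0 : ℤ) - (p.count 1 : ℤ)) ≤ 0} : Language (Fin 4)) := by

  refine ⟨ThompsonCF.gram ThompsonCF.aut, ?_⟩
  rw [ThompsonCF.gram_language]
  ext w
  exact and_congr (ThompsonCF.avoid_iff 0 w) (ThompsonCF.ok_iff 0 w)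
end
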